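/- arXiv:2408.16148 — 7 statements merged into one kernel-verified Lean document; each statement's English description precedes it below -/
import Mathlib

section
/- For every positive integer n, every d ≥ 1, every real a and every real p with p ∈ ℝ, the Mneimneh-like sum satisfies the transformation M_n^{(s_1,…,s_d)}(a,p) = Σ_{n ≥ n_1 ≥ n_2 ≥ … ≥ n_{|s|} ≥ 1} [ (Π_{r=1}^{d} (1-p)^{n_{|s|_{r-1}+1} - n_{|s|_r}}) / (n_1 n_2 ⋯ n_{|s|}) ] · [ (1-p+ap)^{n_{|s|}} − (1-p)^{n_{|s|}} ], where s = (s_1,…,s_d) ∈ ℕ^d, |s|_r := s_1 + … + s_r (with |s|_0 := 0) and |s| := |s|_d. -/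
/-- `ent m α` is the entry `n_{α+1}` (0-indexed access) of the index tuple `m`,
with junk value `1` out of range. -/
def ent {L : ℕ} (m : Fin L → ℕ) (α : ℕ) : ℕ :=
  if h : α < L then m ⟨α, h⟩ else 1

/-- The finite set of index tuples `(n₁,…,n_L)` with `n ≥ n₁ ≥ n₂ ≥ ⋯ ≥ n_L ≥ 1`. -/
def Idx (n L : ℕ) : Finset (Fin L → ℕ) :=
  (Fintype.piFinset fun _ : Fin L => Finset.Icc 1 n).filter
    fun m => ∀ i j : Fin L, i ≤ j → m j ≤ m i

/-- Generalized multiple harmonic-star value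
`ζ*_k(s₁,…,s_d; a) = ∑_{k ≥ n₁ ≥ ⋯ ≥ n_d ≥ 1} a^{n_d}/(n₁^{s₁} ⋯ n_d^{s_d})`. -/
noncomputable def zetaStarK (k : ℕ) (s : List ℕ) (a : ℝ) : ℝ :=
  ∑ m ∈ Idx k s.length,
    a ^ ent m (s.length - 1) / ∏ i : Fin s.length, (m i : ℝ) ^ s.get i

/-- Mneimneh-like sum
`M_n^{(s₁,…,s_d)}(a,p) = ∑_{k=1}^n C(n,k)·p^k·(1-p)^{n-k}·ζ*_k(s;a)`. -/
noncomputable def M (n : ℕ) (s : List ℕ) (a p : ℝ) : ℝ :=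
  ∑ k ∈ Finset.Icc 1 n, (n.choose k : ℝ) * p ^ k * (1 - p) ^ (n - k) * zetaStarK k s a

open Finset

/-- summand weight for an index function -/
noncomputable def Wt (q : ℝ) (φ : ℕ → ℝ) (s : List ℕ) (f : ℕ → ℕ) : ℝ :=
  (∏ r ∈ Finset.range s.length, q ^ (f ((s.take r).sum) - f ((s.take (r + 1)).sum - 1))) /
    (∏ i ∈ Finset.range s.sum, (f i : ℝ)) * φ (f (s.sum - 1))

/-- generalized right hand side -/
noncomputable def Us (q : ℝ) (φ : ℕ → ℝ) (c : ℝ) (n : ℕ) (s : List ℕ) (L : ℕ) : ℝ :=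
  ∑ t ∈ Idx n L, c ^ (n - ent t 0) * Wt q φ s (ent t)

/-- binomial transform -/
noncomputable def Bt (p : ℝ) (g : ℕ → ℝ) (n : ℕ) : ℝ :=
  ∑ k ∈ range (n + 1), (n.choose k : ℝ) * p ^ k * (1 - p) ^ (n - k) * g k

lemma mem_Idx {n L : ℕ} {t : Fin L → ℕ} :
    t ∈ Idx n L ↔ (∀ i, 1 ≤ t i ∧ t i ≤ n) ∧ ∀ i j : Fin L, i ≤ j → t j ≤ t i := by
  simp [Idx]

lemma ent_cons_zero {L : ℕ} (m : ℕ) (t : Fin L → ℕ) :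
    ent (Fin.cons m t : Fin (L + 1) → ℕ) 0 = m := by
  simp only [ent, Nat.zero_lt_succ, dif_pos]
  exact Fin.cons_zero (α := fun _ => ℕ) m t

lemma ent_cons_succ {L : ℕ} (m : ℕ) (t : Fin L → ℕ) (i : ℕ) :
    ent (Fin.cons m t : Fin (L + 1) → ℕ) (i + 1) = ent t i := by
  unfold ent
  by_cases h : i < L
  · rw [dif_pos h, dif_pos (Nat.succ_lt_succ h)]
    exact Fin.cons_succ (α := fun _ => ℕ) m t ⟨i, h⟩
  · rw [dif_neg h, dif_neg (by omega)]

lemma cons_mem_Idx {n L m : ℕ} {t : Fin L → ℕ} :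
    (Fin.cons m t : Fin (L + 1) → ℕ) ∈ Idx n (L + 1) ↔ m ∈ Icc 1 n ∧ t ∈ Idx m L := by
  simp only [mem_Idx, mem_Icc, Fin.forall_fin_succ, Fin.cons_zero, Fin.cons_succ]
  constructor
  · rintro ⟨⟨h1, h2⟩, ⟨_, h3⟩, h4⟩
    refine ⟨h1, fun i => ⟨(h2 i).1, h3 i (Fin.zero_le _)⟩, fun i j hij => ?_⟩
    exact (h4 i).2 j (Fin.succ_le_succ_iff.2 hij)
  · rintro ⟨h1, h2, h3⟩
    refine ⟨⟨h1, fun i => ⟨(h2 i).1, (h2 i).2.trans h1.2⟩⟩, ⟨fun _ => le_rfl,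
      fun j _ => (h2 j).2⟩, fun i => ⟨fun h => ?_, fun j hij => h3 i j (Fin.succ_le_succ_iff.1 hij)⟩⟩
    exact absurd h (by simp [Fin.le_def])

lemma sum_Idx_succ (n L : ℕ) (F : (Fin (L + 1) → ℕ) → ℝ) :
    ∑ t ∈ Idx n (L + 1), F t = ∑ m ∈ Icc 1 n, ∑ t ∈ Idx m L, F (Fin.cons m t) := by
  rw [Finset.sum_sigma']
  symm
  refine Finset.sum_bij (fun x _ => (Fin.cons x.1 x.2 : Fin (L + 1) → ℕ)) ?_ ?_ ?_ ?_
  · rintro ⟨m, t⟩ h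
    rw [mem_sigma] at h
    exact cons_mem_Idx.2 h
  · rintro ⟨m, t⟩ _ ⟨m', t'⟩ _ h
    obtain ⟨h1, h2⟩ := Fin.cons_inj.1 h
    subst h1; subst h2; rfl
  · intro t ht
    refine ⟨⟨t 0, Fin.tail t⟩, ?_, Fin.cons_self_tail t⟩
    rw [mem_sigma]
    rw [← Fin.cons_self_tail t] at ht
    exact cons_mem_Idx.1 ht
  · intros; rfl

lemma sum_Idx_zero (n : ℕ) (F : (Fin 0 → ℕ) → ℝ) : ∑ t ∈ Idx n 0, F t = F Fin.elim0 := by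
  have : Idx n 0 = {Fin.elim0} := by
    ext t
    simp only [mem_Idx, mem_singleton]
    exact ⟨fun _ => Subsingleton.elim _ _, fun _ => ⟨fun i => i.elim0, fun i => i.elim0⟩⟩
  rw [this, sum_singleton]

lemma Wt_succ (q : ℝ) (φ : ℕ → ℝ) (e : ℕ) (s : List ℕ) (f f' : ℕ → ℕ) (hf : ∀ i, f (i + 1) = f' i)
    (h1 : f' 0 ≤ f 0) (h2 : f' e ≤ f' 0) :
    Wt q φ ((e + 2) :: s) f = q ^ (f 0 - f' 0) / (f 0) * Wt q φ ((e + 1) :: s) f' := by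
  unfold Wt
  simp only [List.length_cons, List.sum_cons]
  rw [prod_range_succ', prod_range_succ', show e + 2 + s.sum = (e + 1 + s.sum) + 1 by ring,
    prod_range_succ']
  simp only [List.take_succ_cons, List.sum_cons, List.take_zero, List.sum_nil, add_zero, hf]
  have e1 : ∀ x, f (e + 2 + x) = f' (e + 1 + x) := fun x => by
    rw [← hf]; congr 1; ring
  have e2 : ∀ x, f (e + 2 + x - 1) = f' (e + 1 + x - 1) := fun x => by
    rw [← hf]; congr 1; omega
  have e3 : ∀ x, f (e + 1 + x + 1 - 1) = f' (e + 1 + x - 1) := fun x => by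
    rw [← hf]; congr 1; omega
  have e4 : f (e + 2 - 1) = f' e := by rw [← hf]; rfl
  have e5 : f' (e + 1 - 1) = f' e := rfl
  simp only [e1, e2, e3, e4, e5]
  rw [show f 0 - f' e = (f 0 - f' 0) + (f' 0 - f' e) by omega, pow_add]
  simp only [div_eq_mul_inv, mul_inv]
  ring

lemma Wt_one (q : ℝ) (φ : ℕ → ℝ) (s : List ℕ) (hs : s ≠ []) (hpos : ∀ e ∈ s, 1 ≤ e)
    (f f' : ℕ → ℕ) (hf : ∀ i, f (i + 1) = f' i) :
    Wt q φ (1 :: s) f = 1 / (f 0) * Wt q φ s f' := by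
  have hs1 : ∀ r, 1 ≤ (s.take (r + 1)).sum := by
    intro r
    cases s with
    | nil => exact absurd rfl hs
    | cons b s =>
      have := hpos b (by simp)
      simp only [List.take_succ_cons, List.sum_cons]; omega
  have hs2 : 1 ≤ s.sum := by
    cases s with
    | nil => exact absurd rfl hs
    | cons b s =>
      have := hpos b (by simp)
      simp only [List.sum_cons]; omega
  unfold Wt
  simp only [List.length_cons, List.sum_cons]
  rw [prod_range_succ', add_comm 1 s.sum, prod_range_succ']
  simp only [List.take_succ_cons, List.sum_cons, List.take_zero, List.sum_nil, add_zero, hf]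
  have e1 : ∀ x, f (1 + x) = f' x := fun x => by rw [add_comm, hf]
  have e2 : ∀ r, f (1 + (s.take (r + 1)).sum - 1) = f' ((s.take (r + 1)).sum - 1) := fun r => by
    have := hs1 r
    rw [← hf]; congr 1; omega
  have e3 : f (s.sum + 1 - 1) = f' (s.sum - 1) := by
    rw [← hf]; congr 1; omega
  simp only [e1, e2, e3, Nat.sub_self, pow_zero, mul_one]
  simp only [div_eq_mul_inv, mul_inv]
  ring

lemma Us_succ (q : ℝ) (φ : ℕ → ℝ) (c : ℝ) (n e : ℕ) (s : List ℕ) (L : ℕ)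
    (hL : L = (e + 1) + s.sum) :
    Us q φ c n ((e + 2) :: s) (L + 1) =
      ∑ m ∈ Icc 1 n, c ^ (n - m) / m * Us q φ q m ((e + 1) :: s) L := by
  unfold Us
  rw [sum_Idx_succ]
  refine sum_congr rfl fun m _ => ?_
  rw [mul_sum]
  refine sum_congr rfl fun t ht => ?_
  rw [mem_Idx] at ht
  have hL0 : 0 < L := by omega
  have hLe : e < L := by omega
  have h0 : ent t 0 ≤ m := by
    unfold ent; rw [dif_pos hL0]; exact (ht.1 _).2
  have he : ent t e ≤ ent t 0 := by
    unfold ent; rw [dif_pos hL0, dif_pos hLe]; exact ht.2 _ _ (by simp [Fin.le_def])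
  rw [Wt_succ q φ e s _ (ent t) (ent_cons_succ m t) (by rw [ent_cons_zero]; exact h0) he,
    ent_cons_zero]
  ring

lemma Us_one (q : ℝ) (φ : ℕ → ℝ) (c : ℝ) (n : ℕ) (s : List ℕ) (hs : s ≠ [])
    (hpos : ∀ e ∈ s, 1 ≤ e) (L : ℕ) :
    Us q φ c n (1 :: s) (L + 1) =
      ∑ m ∈ Icc 1 n, c ^ (n - m) / m * Us q φ 1 m s L := by
  unfold Us
  rw [sum_Idx_succ]
  refine sum_congr rfl fun m _ => ?_
  rw [mul_sum]
  refine sum_congr rfl fun t ht => ?_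
  rw [Wt_one q φ s hs hpos _ (ent t) (ent_cons_succ m t), ent_cons_zero]
  ring

lemma Us_single (q : ℝ) (φ : ℕ → ℝ) (c : ℝ) (n : ℕ) :
    Us q φ c n [1] 1 = ∑ m ∈ Icc 1 n, c ^ (n - m) / m * φ m := by
  unfold Us
  rw [sum_Idx_succ]
  refine sum_congr rfl fun m _ => ?_
  rw [sum_Idx_zero]
  simp [Wt, ent_cons_zero]
  ring

lemma zeta_cons (k e : ℕ) (s : List ℕ) (hs : s ≠ []) (a : ℝ) :
    zetaStarK k (e :: s) a = ∑ j ∈ Icc 1 k, zetaStarK j s a / (j : ℝ) ^ e := by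
  unfold zetaStarK
  simp only [List.length_cons]
  rw [sum_Idx_succ]
  refine sum_congr rfl fun m _ => ?_
  rw [sum_div]
  refine sum_congr rfl fun t _ => ?_
  obtain ⟨l, hl⟩ : ∃ l, s.length = l + 1 := 
    ⟨s.length - 1, by have := List.length_pos_iff.2 hs; omega⟩
  have : s.length + 1 - 1 = (s.length - 1) + 1 := by omega
  rw [this, ent_cons_succ, Fin.prod_univ_succ]
  simp only [Fin.cons_zero, Fin.cons_succ, List.get_cons_zero, List.get_cons_succ']
  simp only [div_eq_mul_inv, mul_inv]
  ring

lemma zeta_single (k e : ℕ) (a : ℝ) :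
    zetaStarK k [e] a = ∑ j ∈ Icc 1 k, a ^ j / (j : ℝ) ^ e := by
  unfold zetaStarK
  simp only [List.length_cons, List.length_nil]
  rw [sum_Idx_succ]
  refine sum_congr rfl fun m _ => ?_
  rw [sum_Idx_zero]
  simp [ent_cons_zero]

lemma Bt_zero (p : ℝ) (g : ℕ → ℝ) : Bt p g 0 = g 0 := by simp [Bt]

lemma Bt_succ (p : ℝ) (g : ℕ → ℝ) (n : ℕ) :
    Bt p g (n + 1) = p * Bt p (fun k => g (k + 1)) n + (1 - p) * Bt p g n := by
  have h1 : Bt p g (n + 1) = ∑ k ∈ range (n + 1),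
      (((n.choose k + n.choose (k + 1) : ℕ) : ℝ) * p ^ (k + 1) * (1 - p) ^ (n - k) * g (k + 1))
      + (1 - p) ^ (n + 1) * g 0 := by
    unfold Bt
    rw [sum_range_succ']
    simp [Nat.choose_succ_succ]
  have h2 : (1 - p) * Bt p g n = ∑ k ∈ range (n + 1),
      ((n.choose (k + 1) : ℝ) * p ^ (k + 1) * (1 - p) ^ (n - k) * g (k + 1))
      + (1 - p) ^ (n + 1) * g 0 := by
    unfold Bt
    rw [sum_range_succ', mul_add, sum_range_succ _ n, mul_sum]
    simp only [Nat.choose_succ_self, Nat.cast_zero, zero_mul, add_zero, Nat.choose_zero_right,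
      Nat.cast_one, pow_zero, Nat.sub_zero]
    congr 1
    · refine sum_congr rfl fun k hk => ?_
      rw [mem_range] at hk
      rw [show n - k = (n - (k + 1)) + 1 by omega]
      ring
    · ring
  rw [h1, h2, Bt, mul_sum, ← add_assoc, ← sum_add_distrib]
  congr 1
  refine sum_congr rfl fun k _ => ?_
  push_cast
  ring

lemma Bt_shift_div (p : ℝ) (g : ℕ → ℝ) (h0 : g 0 = 0) (n : ℕ) :
    p * Bt p (fun k => g (k + 1) / ((k + 1 : ℕ) : ℝ)) n = Bt p g (n + 1) / ((n + 1 : ℕ) : ℝ) := by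
  unfold Bt
  rw [sum_range_succ' _ (n + 1), h0, mul_zero, add_zero, mul_sum, sum_div]
  refine sum_congr rfl fun k _ => ?_
  have := Nat.add_one_mul_choose_eq n k
  have h : ((n + 1 : ℕ) : ℝ) * (n.choose k) = ((n + 1).choose (k + 1)) * ((k + 1 : ℕ) : ℝ) := by
    exact_mod_cast this
  have a1 : ((n + 1 : ℕ) : ℝ) ≠ 0 := by positivity
  have a2 : ((k + 1 : ℕ) : ℝ) ≠ 0 := by positivity
  rw [Nat.add_sub_add_right]
  rw [eq_div_iff a1, ← mul_right_inj' a2]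
  field_simp
  linear_combination (p ^ (k + 1) * (1 - p) ^ (n - k) * g (k + 1)) * h

/-- B(Dg) -/
lemma Bt_div (p : ℝ) (g : ℕ → ℝ) (h0 : g 0 = 0) (n : ℕ) :
    Bt p (fun k => g k / (k : ℝ)) n = ∑ m ∈ Icc 1 n, (1 - p) ^ (n - m) / m * Bt p g m := by
  induction n with
  | zero => simp [Bt_zero]
  | succ n ih =>
    rw [Bt_succ, Bt_shift_div p g h0, ih, sum_Icc_succ_top (by omega), mul_sum, add_comm]
    congr 1
    · refine sum_congr rfl fun m hm => ?_
      rw [mem_Icc] at hm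
      rw [show n + 1 - m = (n - m) + 1 by omega]
      ring
    · simp; ring

/-- B(SDg) -/
lemma Bt_sum (p : ℝ) (g : ℕ → ℝ) (h0 : g 0 = 0) (n : ℕ) :
    Bt p (fun k => ∑ j ∈ Icc 1 k, g j / (j : ℝ)) n = ∑ m ∈ Icc 1 n, 1 / (m : ℝ) * Bt p g m := by
  induction n with
  | zero => simp [Bt_zero]
  | succ n ih =>
    have : Bt p (fun k => ∑ j ∈ Icc 1 (k + 1), g j / (j : ℝ)) n =
        Bt p (fun k => ∑ j ∈ Icc 1 k, g j / (j : ℝ)) n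
        + Bt p (fun k => g (k + 1) / ((k + 1 : ℕ) : ℝ)) n := by
      unfold Bt
      rw [← sum_add_distrib]
      refine sum_congr rfl fun k _ => ?_
      beta_reduce
      rw [sum_Icc_succ_top (by omega), mul_add]
    rw [Bt_succ, this, mul_add, Bt_shift_div p g h0, sum_Icc_succ_top (by omega), ← ih]
    ring

/-- the base function or the zeta value -/
noncomputable def gs (a : ℝ) (s : List ℕ) (k : ℕ) : ℝ :=
  if s = [] then (if k = 0 then 0 else a ^ k) else zetaStarK k s a

lemma gs_cons (a : ℝ) (e : ℕ) (s : List ℕ) (k : ℕ) :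
    gs a (e :: s) k = ∑ j ∈ Icc 1 k, gs a s j / (j : ℝ) ^ e := by
  by_cases hs : s = []
  · subst hs
    simp only [gs, List.cons_ne_nil, if_false, if_true, zeta_single]
    refine sum_congr rfl fun j hj => ?_
    rw [mem_Icc] at hj
    rw [if_neg (by omega)]
  · simp only [gs, List.cons_ne_nil, if_false, hs, zeta_cons k e s hs]

lemma gs_zero (a : ℝ) (s : List ℕ) : gs a s 0 = 0 := by
  cases s with
  | nil => simp [gs]
  | cons e s => simp [gs_cons]

lemma Bt_base (a p : ℝ) (n : ℕ) : Bt p (gs a []) n = (1 - p + a * p) ^ n - (1 - p) ^ n := by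
  have h : (1 - p + a * p) ^ n = ∑ k ∈ range (n + 1),
      (n.choose k : ℝ) * p ^ k * (1 - p) ^ (n - k) * a ^ k := by
    rw [add_comm, add_pow]
    refine sum_congr rfl fun k _ => ?_
    rw [mul_pow]; ring
  rw [h, Bt, sum_range_succ', sum_range_succ' _ n]
  simp [gs]

lemma Us_eq (p : ℝ) (φ : ℕ → ℝ) (s : List ℕ) (g : ℕ → ℝ) (h0 : g 0 = 0)
    (hpos : ∀ e ∈ s, 1 ≤ e)
    (hg : ∀ n, Bt p g n = if s = [] then φ n else Us (1 - p) φ 1 n s s.sum) (e : ℕ) :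
    ∀ (c : ℝ) (n : ℕ), Us (1 - p) φ c n ((e + 1) :: s) (e + 1 + s.sum) =
      ∑ m ∈ Icc 1 n, c ^ (n - m) / m * Bt p (fun k => g k / (k : ℝ) ^ e) m := by
  induction e with
  | zero =>
    intro c n
    simp only [pow_zero, div_one, hg, zero_add]
    by_cases hs : s = []
    · subst hs
      simp only [if_true, List.sum_nil, add_zero, Us_single]
    · simp only [if_neg hs]
      rw [add_comm 1 s.sum, Us_one _ _ _ _ _ hs hpos]
  | succ e ih =>
    intro c n
    rw [show e + 1 + 1 + s.sum = (e + 1 + s.sum) + 1 by ring, Us_succ _ _ _ _ _ _ _ rfl]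
    refine sum_congr rfl fun m _ => ?_
    rw [ih]
    have := Bt_div p (fun k => g k / (k : ℝ) ^ e) (by simp [h0]) m
    rw [← this]
    simp only [div_div, ← pow_succ]

lemma main_eq (a p : ℝ) (s : List ℕ) (hpos : ∀ e ∈ s, 1 ≤ e) : ∀ n, Bt p (gs a s) n =
    if s = [] then (1 - p + a * p) ^ n - (1 - p) ^ n else
      Us (1 - p) (fun n => (1 - p + a * p) ^ n - (1 - p) ^ n) 1 n s s.sum := by
  induction s with
  | nil => intro n; simp [Bt_base]
  | cons b s ih =>
    intro n
    have hpos' : ∀ e ∈ s, 1 ≤ e := fun e he => hpos e (List.mem_cons_of_mem _ he)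
    obtain ⟨e, rfl⟩ : ∃ e, b = e + 1 := ⟨b - 1, by have := hpos b (by simp); omega⟩
    rw [if_neg (List.cons_ne_nil _ _), List.sum_cons,
      Us_eq p _ s (gs a s) (gs_zero a s) hpos' (ih hpos') e 1 n]
    have := Bt_sum p (fun k => gs a s k / (k : ℝ) ^ e) (by simp [gs_zero]) n
    simp only [one_pow]
    rw [← this]
    congr 1
    funext k
    rw [gs_cons]
    simp only [div_div, ← pow_succ]

/-- Transformation of Mneimneh-like sums (Theorem 2.1 / main theorem). -/
theorem stmt_0 (n : ℕ) (hn : 0 < n) (s : List ℕ) (hd : s ≠ [])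
    (hpos : ∀ e ∈ s, 1 ≤ e) (a p : ℝ) :
    M n s a p =
      ∑ t ∈ Idx n s.sum,
        (∏ r ∈ Finset.range s.length,
            (1 - p) ^ (ent t ((s.take r).sum) - ent t ((s.take (r + 1)).sum - 1))) /
          (∏ i ∈ Finset.range s.sum, (ent t i : ℝ)) *
          ((1 - p + a * p) ^ ent t (s.sum - 1) - (1 - p) ^ ent t (s.sum - 1)) := by
  have h := main_eq a p s hpos n
  rw [if_neg hd] at h
  have h1 : M n s a p = Bt p (gs a s) n := by
    unfold M Bt
    rw [range_eq_Ico, sum_eq_sum_Ico_succ_bot (by omega), gs_zero, mul_zero, zero_add]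
    refine sum_congr rfl fun k _ => ?_
    simp [gs, hd]
  rw [h1, h]
  simp only [Us, Wt, one_pow, one_mul]
end

section
/- For every real number a and all positive integers d, n, one has Σ_{k=1}^{n} C(n,k) · (−1)^k · ζ*_k({1}_d; a) = ((1−a)^n − 1)/n^d. -/
theorem idx_sum_succ (k L : ℕ) (F : (Fin (L + 1) → ℕ) → ℝ) :
    ∑ m ∈ Idx k (L + 1), F m =
      ∑ j ∈ Finset.Icc 1 k, ∑ m ∈ Idx j L, F (Fin.cons j m) := by
  rw [Finset.sum_sigma']
  symm
  refine Finset.sum_bij' (fun (x : (_ : ℕ) × (Fin L → ℕ)) _ => (Fin.cons x.1 x.2 : Fin (L+1) → ℕ))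
    (fun m _ => ⟨m 0, Fin.tail m⟩) ?_ ?_ ?_ ?_ ?_
  · rintro ⟨j, m⟩ h
    simp only [Idx, Finset.mem_sigma, Finset.mem_filter, Fintype.mem_piFinset,
      Finset.mem_Icc] at h ⊢
    obtain ⟨hj, hm, hs⟩ := h
    constructor
    · intro i
      refine Fin.cases ?_ (fun i => ?_) i
      · simpa using hj
      · have := hm i
        simp only [Fin.cons_succ]
        omega
    · intro i i'
      refine Fin.cases ?_ (fun i => ?_) i <;> refine Fin.cases ?_ (fun i' => ?_) i'
      · simp
      · intro _
        simpa using (hm i').2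
      · intro h
        simp at h
      · intro h
        simpa using hs i i' (by simpa using h)
  · intro m h
    simp only [Idx, Finset.mem_sigma, Finset.mem_filter, Fintype.mem_piFinset,
      Finset.mem_Icc, Fin.tail] at h ⊢
    obtain ⟨hm, hs⟩ := h
    exact ⟨hm 0, fun i => ⟨(hm _).1, hs _ _ (Fin.zero_le _)⟩,
      fun i j hij => hs _ _ (by simpa using hij)⟩
  · rintro ⟨j, m⟩ _
    simp
  · intro m _
    simp
  · intro x _
    rfl

theorem zetaStarK_cons (k x y : ℕ) (s : List ℕ) (a : ℝ) :
    zetaStarK k (x :: y :: s) a =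
      ∑ j ∈ Finset.Icc 1 k, zetaStarK j (y :: s) a / (j : ℝ) ^ x := by
  unfold zetaStarK
  refine (idx_sum_succ k (y :: s).length _).trans ?_
  refine Finset.sum_congr rfl fun j _ => ?_
  rw [Finset.sum_div]
  refine Finset.sum_congr rfl fun m _ => ?_
  rw [div_div, mul_comm]
  congr 1
  · congr 1
    simp only [ent, List.length_cons]
    rw [dif_pos (by omega), dif_pos (by omega)]
    exact Fin.cons_succ (α := fun _ => ℕ) j m ⟨s.length + 1 - 1, by simp⟩
  · exact (Fin.prod_univ_succ (n := (y :: s).length) _).trans (by simp)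

theorem zetaStarK_single (k : ℕ) (a : ℝ) :
    zetaStarK k [1] a = ∑ j ∈ Finset.Icc 1 k, a ^ j / (j : ℝ) := by
  unfold zetaStarK
  refine (idx_sum_succ k 0 _).trans ?_
  refine Finset.sum_congr rfl fun j _ => ?_
  have : Idx j 0 = {Fin.elim0} := by
    ext m
    rw [Finset.mem_singleton]
    exact iff_of_true (by simp only [Idx, Finset.mem_filter, Fintype.mem_piFinset]; exact ⟨fun i => i.elim0, fun i => i.elim0⟩) (funext fun i => i.elim0)
  rw [this, Finset.sum_singleton]
  simp [ent]

theorem partial_sum (f : ℕ → ℝ) (N m : ℕ) :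
    ∑ k ∈ Finset.Icc 1 m, ((N + 1).choose k : ℝ) * (-1) ^ k *
        ∑ j ∈ Finset.Icc 1 k, f j / (j : ℝ) =
      (-1) ^ m * (N.choose m : ℝ) * ∑ j ∈ Finset.Icc 1 m, f j / (j : ℝ) +
      (∑ k ∈ Finset.Icc 1 m, ((N + 1).choose k : ℝ) * (-1) ^ k * f k) / ((N + 1 : ℕ) : ℝ) := by
  induction m with
  | zero => simp
  | succ m ih =>
    rw [Finset.sum_Icc_succ_top (by omega), ih, Finset.sum_Icc_succ_top (by omega),
      Finset.sum_Icc_succ_top (by omega)]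
    generalize ∑ j ∈ Finset.Icc 1 m, f j / (j : ℝ) = S
    generalize ∑ k ∈ Finset.Icc 1 m, ((N + 1).choose k : ℝ) * (-1) ^ k * f k = T
    have h1 : ((N + 1 : ℕ) : ℝ) * N.choose m = (N + 1).choose (m + 1) * ((m + 1 : ℕ) : ℝ) := by
      exact_mod_cast Nat.add_one_mul_choose_eq N m
    have h2 : ((N + 1).choose (m + 1) : ℝ) = N.choose m + N.choose (m + 1) := by
      exact_mod_cast Nat.choose_succ_succ N m
    have hN : ((N + 1 : ℕ) : ℝ) ≠ 0 := by positivity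
    have hm : ((m + 1 : ℕ) : ℝ) ≠ 0 := by positivity
    have h3 : ((N + 1).choose (m + 1) : ℝ) / ((N + 1 : ℕ) : ℝ) =
        N.choose m / ((m + 1 : ℕ) : ℝ) := by
      rw [div_eq_div_iff hN hm]; linarith
    rw [add_div, show ((N + 1).choose (m + 1) : ℝ) * (-1) ^ (m + 1) * f (m + 1) / ((N + 1 : ℕ) : ℝ)
      = ((N + 1).choose (m + 1) : ℝ) / ((N + 1 : ℕ) : ℝ) * ((-1) ^ (m + 1) * f (m + 1)) by ring,
      h3, h2]
    ring

theorem full_sum (f : ℕ → ℝ) (n : ℕ) (hn : 0 < n) :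
    ∑ k ∈ Finset.Icc 1 n, (n.choose k : ℝ) * (-1) ^ k *
        ∑ j ∈ Finset.Icc 1 k, f j / (j : ℝ) =
      (∑ k ∈ Finset.Icc 1 n, (n.choose k : ℝ) * (-1) ^ k * f k) / (n : ℝ) := by
  obtain ⟨N, rfl⟩ : ∃ N, n = N + 1 := ⟨n - 1, by omega⟩
  rw [partial_sum f N (N + 1)]
  simp

theorem base_sum (a : ℝ) (n : ℕ) :
    ∑ k ∈ Finset.Icc 1 n, (n.choose k : ℝ) * (-1) ^ k * a ^ k = (1 - a) ^ n - 1 := by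
  have h := add_pow (-a) 1 n
  rw [Finset.range_eq_Ico, Finset.sum_eq_sum_Ico_succ_bot (by omega)] at h
  have e : Finset.Icc 1 n = Finset.Ico (0 + 1) (n + 1) := by
    ext; simp
  rw [e, show (1 - a) = -a + 1 by ring, h]
  simp only [pow_zero, one_pow, Nat.choose_zero_right, Nat.cast_one, mul_one, add_sub_cancel_left]
  refine Finset.sum_congr rfl fun k _ => ?_
  rw [neg_pow a k]
  ring

/-- Alternating binomial sum of `ζ*_k({1}_d; a)`. -/
theorem stmt_6 (a : ℝ) (d n : ℕ) (hd : 0 < d) (hn : 0 < n) :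
    ∑ k ∈ Finset.Icc 1 n, (n.choose k : ℝ) * (-1) ^ k * zetaStarK k (List.replicate d 1) a =
      ((1 - a) ^ n - 1) / (n : ℝ) ^ d := by
  obtain ⟨e, rfl⟩ : ∃ e, d = e + 1 := ⟨d - 1, by omega⟩
  clear hd
  induction e with
  | zero =>
    simp only [zero_add, List.replicate_one, zetaStarK_single, pow_one]
    rw [full_sum _ n hn, base_sum]
  | succ e ih =>
    have h : ∀ k, zetaStarK k (List.replicate (e + 1 + 1) 1) a =
        ∑ j ∈ Finset.Icc 1 k, zetaStarK j (List.replicate (e + 1) 1) a / (j : ℝ) := by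
      intro k
      have := zetaStarK_cons k 1 1 (List.replicate e 1) a
      simpa only [pow_one, List.replicate_succ] using this
    simp only [h]
    rw [full_sum (fun j => zetaStarK j (List.replicate (e + 1) 1) a) n hn, ih, div_div,
      ← pow_succ]
end

section
/- For all positive integers d and n, one has Σ_{k=1}^{n} C(n,k) · (−1)^{k−1} · ζ*_k({1}_d; 2) = 0 if n is even, and = 2/n^d if n is odd. -/
/-- Auxiliary star sums, with the start value `2 ^ k` at depth `0`. -/
noncomputable def auxZ (d k : ℕ) : ℝ :=
  ∑ m ∈ Idx k d, (2 : ℝ) ^ ((Fin.cons k m : Fin (d + 1) → ℕ) (Fin.last d)) / ∏ i : Fin d, (m i : ℝ)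

theorem zeta_aux (k d : ℕ) (s : List ℕ) (hs : s.length = d + 1) (h1 : ∀ i, s.get i = 1) :
    zetaStarK k s 2 = auxZ (d + 1) k := by
  unfold zetaStarK auxZ
  have key : ∀ L : ℕ, L = d + 1 →
      ∑ m ∈ Idx k L, (2 : ℝ) ^ ent m (L - 1) / ∏ i : Fin L, (m i : ℝ) =
      ∑ m ∈ Idx k (d + 1), (2 : ℝ) ^ ((Fin.cons k m : Fin (d + 1 + 1) → ℕ) (Fin.last (d + 1))) /
        ∏ i : Fin (d + 1), (m i : ℝ) := by
    intro L hL
    subst hL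
    refine Finset.sum_congr rfl fun m _ => ?_
    rw [← Fin.succ_last, Fin.cons_succ]
    congr 2
    simp [ent, Fin.last]
  rw [← key _ hs]
  simp only [h1, pow_one]

theorem auxZ_zero (k : ℕ) : auxZ 0 k = 2 ^ k := by
  have : Idx k 0 = {fun i => i.elim0} := by
    ext m
    have hm : m = fun i => i.elim0 := funext fun i => i.elim0
    rw [Finset.mem_singleton]
    exact ⟨fun _ => hm, fun _ => by simp [Idx, eq_iff_true_of_subsingleton]⟩
  simp [auxZ, this]

theorem auxZ_succ (d k : ℕ) : auxZ (d + 1) k = ∑ j ∈ Finset.Icc 1 k, auxZ d j / (j : ℝ) := by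
  unfold auxZ
  simp_rw [Finset.sum_div]
  rw [Finset.sum_sigma']
  refine Finset.sum_bij' (fun m _ => ⟨m 0, Fin.tail m⟩) (fun p _ => Fin.cons p.1 p.2) ?_ ?_ ?_ ?_ ?_
  · intro m hm
    simp only [Idx, Finset.mem_filter, Fintype.mem_piFinset, Finset.mem_Icc, Finset.mem_sigma] at hm ⊢
    refine ⟨hm.1 0, fun i => ⟨(hm.1 i.succ).1, hm.2 0 i.succ (Fin.zero_le _)⟩, fun i j hij => ?_⟩
    exact hm.2 _ _ (Fin.succ_le_succ_iff.2 hij)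
  · rintro ⟨j, m⟩ hm
    simp only [Idx, Finset.mem_filter, Fintype.mem_piFinset, Finset.mem_Icc, Finset.mem_sigma] at hm ⊢
    obtain ⟨⟨hj1, hj2⟩, hm1, hm2⟩ := hm
    refine ⟨fun i => ?_, fun a b hab => ?_⟩
    · refine Fin.cases ?_ (fun i => ?_) i
      · exact ⟨hj1, hj2⟩
      · exact ⟨(hm1 i).1, (hm1 i).2.trans hj2⟩
    · revert hab
      refine Fin.cases ?_ (fun a => ?_) a <;> refine Fin.cases ?_ (fun b => ?_) b
      · intro _; exact le_rfl
      · intro _; exact (hm1 b).2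
      · intro h; exact absurd h (by simp)
      · intro h; exact hm2 a b (Fin.succ_le_succ_iff.1 h)
  · intro m _
    exact Fin.cons_self_tail m
  · rintro ⟨j, m⟩ _
    simp
  · intro m _
    rw [← Fin.succ_last, Fin.cons_succ, Fin.prod_univ_succ, Fin.cons_self_tail, div_div, mul_comm]
    rfl

theorem alt_tail (n : ℕ) : ∀ j ∈ Finset.Icc 1 (n + 1),
    ∑ k ∈ Finset.Icc j (n + 1), ((n + 1).choose k : ℝ) * (-1) ^ (k - 1) =
      (-1) ^ (j - 1) * (n.choose (j - 1) : ℝ) := by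
  have key : ∀ t i : ℕ, i + t = n →
      ∑ k ∈ Finset.Icc (i + 1) (n + 1), ((n + 1).choose k : ℝ) * (-1) ^ (k - 1) =
      (-1) ^ i * (n.choose i : ℝ) := by
    intro t
    induction t with
    | zero => intro i hi; obtain rfl : i = n := by omega
              simp
    | succ t ih =>
      intro i hi
      rw [← Finset.add_sum_Ioc_eq_sum_Icc (by omega), ← Finset.Icc_add_one_left_eq_Ioc,
        ih (i + 1) (by omega), Nat.choose_succ_succ]
      push_cast
      rw [Nat.succ_eq_add_one]
      ring
  intro j hj
  obtain ⟨h1, h2⟩ := Finset.mem_Icc.1 hj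
  obtain ⟨i, rfl⟩ : ∃ i, j = i + 1 := ⟨j - 1, by omega⟩
  exact key (n - i) i (by omega)

theorem main_aux (n : ℕ) (d : ℕ) :
    ∑ k ∈ Finset.Icc 1 (n + 1), ((n + 1).choose k : ℝ) * (-1) ^ (k - 1) * auxZ d k =
      (1 - (-1) ^ (n + 1)) / ((n + 1 : ℕ) : ℝ) ^ d := by
  induction d with
  | zero =>
    have h := add_pow (-2 : ℝ) 1 (n + 1)
    rw [Finset.sum_range_succ'] at h
    rw [← Finset.Ico_add_one_right_eq_Icc, Finset.sum_Ico_eq_sum_range]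
    simp only [auxZ_zero]
    norm_num at h ⊢
    rw [h, sub_add_cancel_right, ← Finset.sum_neg_distrib]
    refine Finset.sum_congr rfl fun i _ => ?_
    rw [show (-2 : ℝ) = -1 * 2 by norm_num, mul_pow, add_comm 1 i]
    ring
  | succ d ih =>
    rw [pow_succ _ d, ← div_div, ← ih, Finset.sum_div]
    simp_rw [auxZ_succ, Finset.mul_sum]
    rw [Finset.sum_comm' (t' := Finset.Icc 1 (n + 1)) (s' := fun j => Finset.Icc j (n + 1))]
    · refine Finset.sum_congr rfl fun j hj => ?_
      rw [← Finset.sum_mul, alt_tail n j hj]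
      obtain ⟨h1, h2⟩ := Finset.mem_Icc.1 hj
      obtain ⟨i, rfl⟩ : ∃ i, j = i + 1 := ⟨j - 1, by omega⟩
      have h : ((n + 1 : ℕ) : ℝ) * n.choose i = (n + 1).choose (i + 1) * ((i + 1 : ℕ) : ℝ) := by
        exact_mod_cast Nat.add_one_mul_choose_eq n i
      have hn : ((n + 1 : ℕ) : ℝ) ≠ 0 := by positivity
      have hi : ((i + 1 : ℕ) : ℝ) ≠ 0 := by positivity
      simp only [Nat.add_sub_cancel]
      rw [mul_div_assoc', div_eq_div_iff hi hn]
      linear_combination (-1) ^ i * auxZ d (i + 1) * h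
    · intro x y
      simp only [Finset.mem_Icc]
      omega

/-- Alternating binomial sum of `ζ*_k({1}_d; 2)`: vanishes for even `n`,
equals `2/n^d` for odd `n`. -/
theorem stmt_7 (d n : ℕ) (hd : 0 < d) (hn : 0 < n) :
    ∑ k ∈ Finset.Icc 1 n,
        (n.choose k : ℝ) * (-1) ^ (k - 1) * zetaStarK k (List.replicate d 1) 2 =
      if Even n then 0 else 2 / (n : ℝ) ^ d := by
  obtain ⟨d, rfl⟩ : ∃ i, d = i + 1 := ⟨d - 1, by omega⟩
  obtain ⟨n, rfl⟩ : ∃ i, n = i + 1 := ⟨n - 1, by omega⟩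
  have hz : ∀ k, zetaStarK k (List.replicate (d + 1) 1) 2 = auxZ (d + 1) k := fun k =>
    zeta_aux k d _ (by simp) (by intro i; simp)
  simp only [hz]
  rw [main_aux]
  split_ifs with h
  · simp [h.neg_one_pow]
  · rw [(Nat.not_even_iff_odd.1 h).neg_one_pow]
    norm_num
end

section
/- Let s ∈ ℕ with s ≥ 2, and let a, p ∈ ℝ with p ≠ 1 and |a| ≤ min(1, 2/p − 1). Then Li_s(a) = Li*_{{1}_s}(1−p, {1}_{s−2}, 1 + ap/(1−p)) − Li*_{{1}_s}(1−p, {1}_{s−1}), where Li_s(a) = Σ_{n≥1} a^n/n^s is the one-dimensional polylogarithm. -/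
/-- One-dimensional polylogarithm `Li_s(x) = ∑_{n≥1} x^n/n^s`. -/
noncomputable def Li (s : ℕ) (x : ℝ) : ℝ := ∑' n : ℕ, x ^ (n + 1) / (n + 1 : ℝ) ^ s

/-- Multiple polylogarithm
`Li*_{s₁,…,s_d}(x₁,…,x_d) = ∑_{n₁ ≥ ⋯ ≥ n_d ≥ 1} ∏ᵢ xᵢ^{nᵢ}/nᵢ^{sᵢ}`. -/
noncomputable def LiStar (s : List ℕ) (x : List ℝ) : ℝ :=
  ∑' m : {m : Fin s.length → ℕ // (∀ i j : Fin s.length, i ≤ j → m j ≤ m i) ∧ ∀ i, 1 ≤ m i},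
    ∏ i : Fin s.length, x.getD (i : ℕ) 0 ^ m.1 i / (m.1 i : ℝ) ^ s.get i

/-- Weakly decreasing tuples of positive integers. -/
def StarP {d : ℕ} (m : Fin d → ℕ) : Prop :=
  (∀ i j : Fin d, i ≤ j → m j ≤ m i) ∧ ∀ i, 1 ≤ m i

lemma starP_cons {d : ℕ} (k : ℕ) (m : Fin d → ℕ) :
    StarP (Fin.cons k m : Fin (d + 1) → ℕ) ↔ 1 ≤ k ∧ StarP m ∧ ∀ i, m i ≤ k := by
  constructor
  · rintro ⟨h1, h2⟩
    refine ⟨by simpa using h2 0, ⟨fun i j hij => ?_, fun i => by simpa using h2 i.succ⟩, fun i => ?_⟩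
    · simpa using h1 i.succ j.succ (by simpa using hij)
    · simpa using h1 0 i.succ (Fin.zero_le _)
  · rintro ⟨hk, ⟨h1, h2⟩, h3⟩
    refine ⟨fun i j hij => ?_, fun i => ?_⟩
    · induction i using Fin.cases with
      | zero =>
        induction j using Fin.cases with
        | zero => simp
        | succ j => simpa using h3 j
      | succ i =>
        induction j using Fin.cases with
        | zero => simp at hij
        | succ j => simpa using h1 i j (by simpa using hij)
    · induction i using Fin.cases with
      | zero => simpa using hk
      | succ i => simpa using h2 i

open Classical in
/-- Decreasing tuples bounded by `n`. -/
noncomputable def StarT (d n : ℕ) : Finset (Fin d → ℕ) :=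
  (Fintype.piFinset fun _ : Fin d => Finset.Icc 1 n).filter StarP

lemma mem_starT {d n : ℕ} (m : Fin d → ℕ) : m ∈ StarT d n ↔ StarP m ∧ ∀ i, m i ≤ n := by
  simp only [StarT, Finset.mem_filter, Fintype.mem_piFinset, Finset.mem_Icc]
  constructor
  · rintro ⟨h1, h2⟩
    exact ⟨h2, fun i => (h1 i).2⟩
  · rintro ⟨h1, h2⟩
    exact ⟨fun i => ⟨h1.2 i, h2 i⟩, h1⟩

/-- Iterated harmonic averaging. -/
noncomputable def StarA (g : ℕ → ℝ) : ℕ → ℕ → ℝ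
  | 0, n => g n
  | j + 1, n => ∑ k ∈ Finset.range n, StarA g j (k + 1) / ((k + 1 : ℕ) : ℝ)

lemma starT_sum (g : ℕ → ℝ) (d : ℕ) : ∀ n : ℕ,
    ∑ m ∈ StarT d n, g ((Fin.cons n m : Fin (d + 1) → ℕ) (Fin.last d)) * ∏ i, ((m i : ℕ) : ℝ)⁻¹
      = StarA g d n := by
  induction d with
  | zero =>
    intro n
    have : StarT 0 n = Finset.univ := by
      ext m
      simp only [Finset.mem_univ, iff_true, mem_starT, StarP]
      exact ⟨⟨fun i => i.elim0, fun i => i.elim0⟩, fun i => i.elim0⟩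
    rw [this]
    simp [StarA]
  | succ d ih =>
    intro n
    simp only [StarA]
    simp_rw [← ih, Finset.sum_div]
    rw [Finset.sum_sigma']
    symm
    refine Finset.sum_bij (fun x _ => (Fin.cons (x.1 + 1) x.2 : Fin (d + 1) → ℕ)) ?_ ?_ ?_ ?_
    · rintro ⟨k, m⟩ h
      simp only [Finset.mem_sigma, Finset.mem_range, mem_starT] at h
      rw [mem_starT, starP_cons]
      refine ⟨⟨by simp, h.2.1, h.2.2⟩, fun i => ?_⟩
      induction i using Fin.cases with
      | zero => simp; omega
      | succ i => simp; have := h.2.2 i; omega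
    · rintro ⟨k, m⟩ _ ⟨k', m'⟩ _ h
      have h' := Fin.cons_inj.1 h
      obtain ⟨h1, h2⟩ := h'
      have h3 : k = k' := by simpa using h1
      simp only at h2
      subst h3
      subst h2
      rfl
    · intro m hm
      rw [mem_starT] at hm
      have hc : m = Fin.cons (m 0) (Fin.tail m) := (Fin.cons_self_tail m).symm
      have hP := hm.1
      rw [hc, starP_cons] at hP
      have hn := hm.2 0
      refine ⟨⟨m 0 - 1, Fin.tail m⟩, ?_, ?_⟩
      · simp only [Finset.mem_sigma, Finset.mem_range, mem_starT]
        refine ⟨by omega, hP.2.1, fun i => ?_⟩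
        have := hP.2.2 i
        omega
      · have : m 0 - 1 + 1 = m 0 := by omega
        simp only [this]
        exact Fin.cons_self_tail m
    · rintro ⟨k, m⟩ _
      rw [Fin.prod_univ_succ]
      simp only [Fin.cons_zero, Fin.cons_succ, ← Fin.succ_last]
      rw [div_eq_mul_inv]
      ring

/-- Splitting off the leading entry. -/
noncomputable def starEquiv (d : ℕ) :
    (Σ n : ℕ, {m // m ∈ StarT d (n + 1)}) ≃ {m : Fin (d + 1) → ℕ // StarP m} :=
  Equiv.ofBijective
    (fun x => ⟨Fin.cons (x.1 + 1) x.2.1,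
      (starP_cons _ _).2 ⟨by simp, ((mem_starT _).1 x.2.2).1, ((mem_starT _).1 x.2.2).2⟩⟩)
    (by
      constructor
      · rintro ⟨k, m, hm⟩ ⟨k', m', hm'⟩ h
        have h0 : (Fin.cons (k + 1) m : Fin (d + 1) → ℕ) = Fin.cons (k' + 1) m' :=
          congrArg Subtype.val h
        have h' := Fin.cons_inj.1 h0
        obtain ⟨h1, h2⟩ := h'
        have h3 : k = k' := by simpa using h1
        subst h3
        subst h2
        rfl
      · rintro ⟨m, hm⟩
        have hP := hm
        have hc : m = Fin.cons (m 0) (Fin.tail m) := (Fin.cons_self_tail m).symm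
        rw [hc, starP_cons] at hP
        have h1 : m 0 - 1 + 1 = m 0 := by omega
        refine ⟨⟨m 0 - 1, Fin.tail m, ?_⟩, ?_⟩
        · rw [mem_starT, h1]
          exact hP.2
        · apply Subtype.ext
          simp only [h1]
          exact Fin.cons_self_tail m)

lemma starMain (c g : ℕ → ℝ) (d : ℕ)
    (hs : Summable fun n : ℕ =>
      |c (n + 1)| * ((n + 1 : ℕ) : ℝ)⁻¹ * StarA (fun k => |g k|) d (n + 1)) :
    ∑' m : {m : Fin (d + 1) → ℕ // StarP m},
      c (m.1 0) * g (m.1 (Fin.last d)) * ∏ i, ((m.1 i : ℕ) : ℝ)⁻¹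
    = ∑' n : ℕ, c (n + 1) * ((n + 1 : ℕ) : ℝ)⁻¹ * StarA g d (n + 1) := by
  have key : ∀ (c g : ℕ → ℝ) (n : ℕ), ∑ m : {m // m ∈ StarT d (n + 1)},
      (c ((starEquiv d ⟨n, m⟩).1 0) * g ((starEquiv d ⟨n, m⟩).1 (Fin.last d)) *
        ∏ i, (((starEquiv d ⟨n, m⟩).1 i : ℕ) : ℝ)⁻¹) =
        c (n + 1) * ((n + 1 : ℕ) : ℝ)⁻¹ * StarA g d (n + 1) := by
    intro c g n
    rw [← starT_sum, Finset.mul_sum, ← Finset.sum_coe_sort (StarT d (n + 1))]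
    refine Finset.sum_congr rfl fun m _ => ?_
    have : (starEquiv d ⟨n, m⟩).1 = Fin.cons (n + 1) m.1 := rfl
    rw [this, Fin.prod_univ_succ]
    simp only [Fin.cons_zero, Fin.cons_succ]
    ring
  rw [← (starEquiv d).tsum_eq]
  have hsum : Summable fun x : (Σ n : ℕ, {m // m ∈ StarT d (n + 1)}) =>
      c ((starEquiv d x).1 0) * g ((starEquiv d x).1 (Fin.last d)) *
        ∏ i, (((starEquiv d x).1 i : ℕ) : ℝ)⁻¹ := by
    apply Summable.of_abs
    rw [summable_sigma_of_nonneg (fun _ => abs_nonneg _)]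
    refine ⟨fun n => (hasSum_fintype _).summable, ?_⟩
    refine hs.congr fun n => ?_
    rw [tsum_fintype, ← key (fun k => |c k|) (fun k => |g k|) n]
    refine Finset.sum_congr rfl fun m _ => ?_
    rw [abs_mul, abs_mul, Finset.abs_prod]
    simp
  rw [hsum.tsum_sigma' (fun n => (hasSum_fintype _).summable)]
  refine tsum_congr fun n => ?_
  rw [tsum_fintype, key]

lemma starA_sub (g h : ℕ → ℝ) (d : ℕ) : ∀ n,
    StarA (fun k => g k - h k) d n = StarA g d n - StarA h d n := by
  induction d with
  | zero => intro n; rfl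
  | succ d ih =>
    intro n
    simp only [StarA, ih, sub_div, Finset.sum_sub_distrib]

lemma starA_mono (g h : ℕ → ℝ) (hgh : ∀ k, g k ≤ h k) (d : ℕ) : ∀ n,
    StarA g d n ≤ StarA h d n := by
  induction d with
  | zero => intro n; exact hgh n
  | succ d ih =>
    intro n
    simp only [StarA]
    exact Finset.sum_le_sum fun k _ => by
      have := ih (k + 1)
      gcongr

lemma starA_nonneg (g : ℕ → ℝ) (hg : ∀ k, 0 ≤ g k) (d : ℕ) : ∀ n, 0 ≤ StarA g d n := by
  induction d with
  | zero => intro n; exact hg n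
  | succ d ih =>
    intro n
    simp only [StarA]
    exact Finset.sum_nonneg fun k _ => div_nonneg (ih _) (by positivity)

lemma starA_one_le (d : ℕ) : ∀ n, StarA (fun _ => 1) d n ≤ (n : ℝ) ^ d := by
  induction d with
  | zero => intro n; simp [StarA]
  | succ d ih =>
    intro n
    simp only [StarA]
    calc _ ≤ ∑ k ∈ Finset.range n, (n : ℝ) ^ d := by
          refine Finset.sum_le_sum fun k hk => ?_
          have hk' : ((k + 1 : ℕ) : ℝ) ≤ n := by
            exact_mod_cast Finset.mem_range.1 hk
          have h1 : (1 : ℝ) ≤ ((k + 1 : ℕ) : ℝ) := by push_cast; linarith [k.cast_nonneg (α := ℝ)]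
          calc _ ≤ StarA (fun _ => 1) d (k + 1) :=
                div_le_self (starA_nonneg _ (fun _ => zero_le_one) _ _) h1
            _ ≤ ((k + 1 : ℕ) : ℝ) ^ d := ih _
            _ ≤ _ := by gcongr
      _ = _ := by simp [pow_succ, mul_comm]

lemma choose_div (m k : ℕ) :
    ((m + 1).choose (k + 1) : ℝ) / ((m + 1 : ℕ) : ℝ) = (m.choose k : ℝ) / ((k + 1 : ℕ) : ℝ) := by
  have := Nat.add_one_mul_choose_eq m k
  have h2 : ((m + 1 : ℕ) : ℝ) * (m.choose k : ℝ)
      = ((m + 1).choose (k + 1) : ℝ) * ((k + 1 : ℕ) : ℝ) := by exact_mod_cast this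
  rw [div_eq_div_iff (by positivity) (by positivity)]
  linarith

lemma starA_formula (w : ℝ) (d : ℕ) : ∀ n, StarA (fun k => (1 + w) ^ k - 1) d n =
    ∑ k ∈ Finset.range n, (n.choose (k + 1) : ℝ) * w ^ (k + 1) / ((k + 1 : ℕ) : ℝ) ^ d := by
  induction d with
  | zero =>
    intro n
    simp only [StarA]
    rw [add_comm 1 w, add_pow, Finset.sum_range_succ']
    simp [mul_comm]
  | succ d ih =>
    intro n
    induction n with
    | zero => simp [StarA]
    | succ n ihn =>
      have : StarA (fun k => (1 + w) ^ k - 1) (d + 1) (n + 1) =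
          StarA (fun k => (1 + w) ^ k - 1) (d + 1) n +
          StarA (fun k => (1 + w) ^ k - 1) d (n + 1) / ((n + 1 : ℕ) : ℝ) := by
        simp only [StarA, Finset.sum_range_succ]
      rw [this, ihn, ih, Finset.sum_div]
      have h0 : ∑ k ∈ Finset.range n,
          (n.choose (k + 1) : ℝ) * w ^ (k + 1) / ((k + 1 : ℕ) : ℝ) ^ (d + 1) =
          ∑ k ∈ Finset.range (n + 1),
          (n.choose (k + 1) : ℝ) * w ^ (k + 1) / ((k + 1 : ℕ) : ℝ) ^ (d + 1) := by
        rw [Finset.sum_range_succ]; simp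
      rw [h0, ← Finset.sum_add_distrib]
      refine Finset.sum_congr rfl fun k _ => ?_
      have hc := choose_div n k
      have e : (((n + 1).choose (k + 1) : ℝ) * w ^ (k + 1) / ((k + 1 : ℕ) : ℝ) ^ d)
          / ((n + 1 : ℕ) : ℝ) = (((n + 1).choose (k + 1) : ℝ) / ((n + 1 : ℕ) : ℝ)) *
            (w ^ (k + 1) / ((k + 1 : ℕ) : ℝ) ^ d) := by ring
      rw [e, hc, Nat.choose_succ_succ, pow_succ]
      push_cast
      field_simp
      ring

/-- The double series. -/
noncomputable def StarD (q w : ℝ) (j : ℕ) (x : ℕ × ℕ) : ℝ :=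
  q ^ (x.2 + 1) * (x.2.choose x.1 : ℝ) * w ^ (x.1 + 1) / ((x.1 + 1 : ℕ) : ℝ) ^ (j + 1)

lemma starD_row (q w : ℝ) (hq : |q| < 1) (j k : ℕ) :
    HasSum (fun n => StarD q w j (k, n))
      ((q * w / (1 - q)) ^ (k + 1) / ((k + 1 : ℕ) : ℝ) ^ (j + 1)) := by
  have h1q : 1 - q ≠ 0 := by have := (abs_lt.1 hq).2; intro h; linarith
  have h := hasSum_choose_mul_geometric_of_norm_lt_one k (r := q) (by simpa using hq)
  have h2 := h.mul_left (q ^ (k + 1) * w ^ (k + 1) / ((k + 1 : ℕ) : ℝ) ^ (j + 1))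
  have hz : ∀ n ∈ Finset.range k, StarD q w j (k, n) = 0 := by
    intro n hn
    simp [StarD, Nat.choose_eq_zero_of_lt (Finset.mem_range.1 hn)]
  rw [← hasSum_nat_add_iff' k, Finset.sum_eq_zero hz, sub_zero]
  have e1 : (fun n => StarD q w j (k, n + k)) = fun i =>
      q ^ (k + 1) * w ^ (k + 1) / ((k + 1 : ℕ) : ℝ) ^ (j + 1) * (((i + k).choose k : ℝ) * q ^ i) := by
    funext n
    simp only [StarD]
    ring
  have e2 : (q * w / (1 - q)) ^ (k + 1) / ((k + 1 : ℕ) : ℝ) ^ (j + 1) =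
      q ^ (k + 1) * w ^ (k + 1) / ((k + 1 : ℕ) : ℝ) ^ (j + 1) * (1 / (1 - q) ^ (k + 1)) := by
    rw [div_pow, mul_pow]
    ring
  rw [e1, e2]
  exact h2

lemma starD_abs (q w : ℝ) (j : ℕ) (x : ℕ × ℕ) : |StarD q w j x| = StarD |q| |w| j x := by
  simp only [StarD, abs_mul, abs_div, abs_pow, Nat.abs_cast]

lemma starD_summable (q w : ℝ) (hq : |q| < 1) (h : |q| * |w| ≤ 1 - |q|) (j : ℕ) :
    Summable (StarD q w (j + 1)) := by
  apply Summable.of_abs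
  simp_rw [starD_abs]
  have hnn : ∀ x, 0 ≤ StarD |q| |w| (j + 1) x := fun x => by unfold StarD; positivity
  rw [summable_prod_of_nonneg hnn]
  have hrow := starD_row |q| |w| (by simpa using hq) (j + 1)
  refine ⟨fun k => (hrow k).summable, ?_⟩
  simp_rw [fun k => (hrow k).tsum_eq]
  have hs : Summable fun k : ℕ => 1 / ((k + 1 : ℕ) : ℝ) ^ (j + 1 + 1) :=
    (summable_nat_add_iff 1).2 (Real.summable_one_div_nat_pow.2 (by omega))
  have hb0 : 0 ≤ |q| * |w| / (1 - |q|) := div_nonneg (by positivity) (by linarith)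
  refine Summable.of_nonneg_of_le (fun k => by positivity) (fun k => ?_) hs
  gcongr
  exact pow_le_one₀ hb0 ((div_le_one (by linarith)).2 h)

lemma starD_col (q w : ℝ) (j n : ℕ) :
    HasSum (fun k => StarD q w j (k, n))
      (q ^ (n + 1) * ((n + 1 : ℕ) : ℝ)⁻¹ * StarA (fun k => (1 + w) ^ k - 1) j (n + 1)) := by
  rw [starA_formula, Finset.mul_sum]
  have : ∀ k, StarD q w j (k, n) = q ^ (n + 1) * ((n + 1 : ℕ) : ℝ)⁻¹ *
      (((n + 1).choose (k + 1) : ℝ) * w ^ (k + 1) / ((k + 1 : ℕ) : ℝ) ^ j) := by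
    intro k
    have hc := choose_div n k
    have e : q ^ (n + 1) * ((n + 1 : ℕ) : ℝ)⁻¹ *
      (((n + 1).choose (k + 1) : ℝ) * w ^ (k + 1) / ((k + 1 : ℕ) : ℝ) ^ j) =
      q ^ (n + 1) * (((n + 1).choose (k + 1) : ℝ) / ((n + 1 : ℕ) : ℝ)) *
        (w ^ (k + 1) / ((k + 1 : ℕ) : ℝ) ^ j) := by ring
    rw [e, hc]
    simp only [StarD]
    field_simp
    ring
  simp_rw [← this]
  apply hasSum_sum_of_ne_finset_zero
  intro k hk
  have : n < k := by simpa using hk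
  simp [StarD, Nat.choose_eq_zero_of_lt this]

lemma one_summable (q : ℝ) (hq : |q| < 1) (j : ℕ) :
    Summable fun n : ℕ => |q| ^ (n + 1) * ((n + 1 : ℕ) : ℝ)⁻¹ * StarA (fun _ => 1) j (n + 1) := by
  have h := (summable_nat_add_iff 1).2
    (summable_pow_mul_geometric_of_norm_lt_one j (r := |q|) (by simpa using hq))
  refine Summable.of_nonneg_of_le (fun n => ?_) (fun n => ?_) h
  · have := starA_nonneg (fun _ => 1) (fun _ => zero_le_one) j (n + 1)
    positivity
  · have h1 := starA_one_le j (n + 1)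
    have h2 : (((n + 1 : ℕ) : ℝ))⁻¹ ≤ 1 := inv_le_one_of_one_le₀ (by
      push_cast; linarith [n.cast_nonneg (α := ℝ)])
    have h0 := starA_nonneg (fun _ => 1) (fun _ => zero_le_one) j (n + 1)
    calc _ ≤ |q| ^ (n + 1) * 1 * ((n + 1 : ℕ) : ℝ) ^ j := by gcongr
      _ = _ := by ring

lemma gen_summable (q w y : ℝ) (hq : |q| < 1) (h : |q| * |w| ≤ 1 - |q|) (hy : |y| ≤ 1 + |w|)
    (j : ℕ) : Summable fun n : ℕ =>
      |q ^ (n + 1)| * ((n + 1 : ℕ) : ℝ)⁻¹ * StarA (fun k => |y ^ k|) (j + 1) (n + 1) := by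
  have h1 := one_summable q hq (j + 1)
  have hD := starD_summable |q| |w| (by simpa using hq) (by simpa using h) j
  have h2 : Summable fun n : ℕ => |q| ^ (n + 1) * ((n + 1 : ℕ) : ℝ)⁻¹ *
      StarA (fun k => (1 + |w|) ^ k - 1) (j + 1) (n + 1) := by
    have := hD.prod_symm.prod
    refine this.congr fun n => ?_
    exact (starD_col |q| |w| (j + 1) n).tsum_eq
  refine Summable.of_nonneg_of_le (fun n => ?_) (fun n => ?_) (h2.add h1)
  · have := starA_nonneg (fun k => |y ^ k|) (fun _ => abs_nonneg _) (j + 1) (n + 1)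
    positivity
  · rw [starA_sub, ← mul_add, abs_pow, sub_add_cancel]
    gcongr
    apply starA_mono
    intro k
    rw [abs_pow]
    gcongr

lemma series_main (q w : ℝ) (hq : |q| < 1) (h : |q| * |w| ≤ 1 - |q|) (j : ℕ) :
    ∑' n : ℕ, q ^ (n + 1) * ((n + 1 : ℕ) : ℝ)⁻¹ *
      StarA (fun k => (1 + w) ^ k - 1) (j + 1) (n + 1)
    = ∑' k : ℕ, (q * w / (1 - q)) ^ (k + 1) / ((k + 1 : ℕ) : ℝ) ^ (j + 2) := by
  have hD := starD_summable q w hq h j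
  simp_rw [← fun n => (starD_col q w (j + 1) n).tsum_eq]
  rw [Summable.tsum_comm (f := fun k n => StarD q w (j + 1) (k, n)) hD]
  exact tsum_congr fun k => (starD_row q w hq (j + 1) k).tsum_eq

lemma liStar_eq (N : ℕ) (l : List ℕ) (hl : l.length = N) (h1 : ∀ i, l.get i = 1) (x : List ℝ) :
    LiStar l x = ∑' m : {m : Fin N → ℕ // StarP m},
      ∏ i : Fin N, x.getD (i : ℕ) 0 ^ m.1 i / (m.1 i : ℝ) := by
  subst hl
  unfold LiStar
  simp only [h1, pow_one]
  rfl

lemma liStar_conv (q y : ℝ) (j : ℕ) :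
    LiStar (List.replicate (j + 2) 1) (q :: (List.replicate j (1 : ℝ) ++ [y])) =
    ∑' m : {m : Fin (j + 1 + 1) → ℕ // StarP m},
      q ^ (m.1 0) * y ^ (m.1 (Fin.last (j + 1))) * ∏ i, ((m.1 i : ℕ) : ℝ)⁻¹ := by
  rw [liStar_eq (j + 2) _ (by simp) (by simp)]
  refine tsum_congr fun m => ?_
  simp_rw [div_eq_mul_inv]
  rw [Finset.prod_mul_distrib]
  congr 1
  rw [Fin.prod_univ_succ, Fin.prod_univ_castSucc]
  have : ∀ i : Fin j, (List.replicate j (1 : ℝ) ++ [y]).getD (i : ℕ) 0 = 1 := by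
    intro i
    rw [List.getD_append _ _ _ _ (by simp)]
    simp
  have h2 : (List.replicate j (1 : ℝ) ++ [y]).getD j 0 = y := by
    rw [List.getD_append_right _ _ _ _ (by simp)]
    simp
  simp only [Fin.val_succ, Fin.val_castSucc, List.getD_cons_succ, this, one_pow,
    Finset.prod_const_one, Fin.val_last, h2, Fin.succ_last, Fin.val_zero, List.getD_cons_zero]
  ring

lemma starA_abs (g : ℕ → ℝ) (d : ℕ) : ∀ n, |StarA g d n| ≤ StarA (fun k => |g k|) d n := by
  induction d with
  | zero => intro n; exact le_rfl
  | succ d ih =>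
    intro n
    simp only [StarA]
    refine (Finset.abs_sum_le_sum_abs _ _).trans (Finset.sum_le_sum fun k _ => ?_)
    rw [abs_div, Nat.abs_cast]
    have := ih (k + 1)
    gcongr

/-- `Li_s(a)` as a difference of `s`-dimensional multiple polylogarithms. -/
theorem stmt_9 (s : ℕ) (hs : 2 ≤ s) (a p : ℝ) (hp : p ≠ 1)
    (ha : |a| ≤ min 1 (2 / p - 1)) :
    Li s a =
      LiStar (List.replicate s 1)
          ((1 - p) :: (List.replicate (s - 2) (1 : ℝ) ++ [1 + a * p / (1 - p)])) -
        LiStar (List.replicate s 1) ((1 - p) :: List.replicate (s - 1) (1 : ℝ)) := by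
  obtain ⟨j, rfl⟩ : ∃ j, s = j + 2 := ⟨s - 2, by omega⟩
  have e1 : j + 2 - 2 = j := rfl
  have e2 : j + 2 - 1 = j + 1 := rfl
  rw [e1, e2, List.replicate_succ' (n := j)]
  have ha1 : |a| ≤ 1 := ha.trans (min_le_left _ _)
  have ha2 : |a| ≤ 2 / p - 1 := ha.trans (min_le_right _ _)
  have ha0 := abs_nonneg a
  have hp0 : 0 < p := by
    by_contra hcon
    have : 2 / p ≤ 0 := div_nonpos_of_nonneg_of_nonpos (by norm_num) (not_lt.1 hcon)
    linarith
  have hap : |a| * p ≤ 2 - p := by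
    have := mul_le_mul_of_nonneg_right ha2 hp0.le
    rw [sub_mul, div_mul_cancel₀ _ hp0.ne'] at this
    linarith
  have hp2 : p ≤ 2 := by nlinarith
  have hq0 : 1 - p ≠ 0 := fun h => hp (by linarith)
  rcases hp2.eq_or_lt with rfl | hlt
  · have : a = 0 := by
      rw [← abs_nonpos_iff]
      linarith
    subst this
    simp [Li]
  have hq : |1 - p| < 1 := by rw [abs_lt]; constructor <;> linarith
  set w := a * p / (1 - p) with hw
  have hqw : (1 - p) * w = a * p := by rw [hw]; field_simp
  have hb : |1 - p| * |w| ≤ 1 - |1 - p| := by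
    rw [← abs_mul, hqw, abs_mul, abs_of_pos hp0]
    rcases abs_cases (1 - p) with ⟨h, _⟩ | ⟨h, _⟩ <;> rw [h] <;> nlinarith
  have hs1 := gen_summable (1 - p) w (1 + w) hq hb
    ((abs_add_le _ _).trans (by simp)) j
  have hs2 := gen_summable (1 - p) w 1 hq hb (by simp) j
  rw [liStar_conv, liStar_conv,
    starMain (fun n => (1 - p) ^ n) (fun n => (1 + w) ^ n) (j + 1) hs1,
    starMain (fun n => (1 - p) ^ n) (fun n => 1 ^ n) (j + 1) hs2]
  have abs_le' : ∀ (y : ℝ), (Summable fun n : ℕ =>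
      |(1 - p) ^ (n + 1)| * ((n + 1 : ℕ) : ℝ)⁻¹ * StarA (fun k => |y ^ k|) (j + 1) (n + 1)) →
      Summable fun n : ℕ =>
      (1 - p) ^ (n + 1) * ((n + 1 : ℕ) : ℝ)⁻¹ * StarA (fun k => y ^ k) (j + 1) (n + 1) := by
    intro y hy
    refine Summable.of_norm_bounded hy fun n => ?_
    rw [Real.norm_eq_abs, abs_mul, abs_mul, abs_of_nonneg (a := ((n + 1 : ℕ) : ℝ)⁻¹)
      (by positivity)]
    gcongr
    exact starA_abs _ _ _
  rw [← (abs_le' _ hs1).tsum_sub (abs_le' _ hs2)]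
  simp_rw [← mul_sub, ← starA_sub, one_pow]
  rw [series_main _ _ hq hb, hqw, sub_sub_cancel, mul_div_assoc, div_self hp0.ne', mul_one]
  simp [Li]
end

section
/- Let s ∈ ℕ with s ≥ 2, and let p ∈ ℝ with 1/2 ≤ p < 1. Then Li*_{{1}_s}(1−p, {1}_{s−1}) = −Li_s(1 − 1/p), where Li_s(x) = Σ_{n≥1} x^n/n^s is the one-dimensional polylogarithm. -/
/-- Nested harmonic sums. -/
noncomputable def SS : ℕ → ℕ → ℝ
  | 0, _ => 1
  | k + 1, n => ∑ i ∈ Finset.range n, SS k (i + 1) / ((i : ℝ) + 1)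

lemma SS_nonneg (k : ℕ) : ∀ n, 0 ≤ SS k n := by
  induction k with
  | zero => intro n; simp [SS]
  | succ k ih =>
    intro n
    simp only [SS]
    exact Finset.sum_nonneg fun i _ => div_nonneg (ih _) (by positivity)

noncomputable def UU (k n : ℕ) : ℝ :=
  ∑ j ∈ Finset.range (n + 1), (-1 : ℝ) ^ j * (n.choose j) / ((j : ℝ) + 1) ^ (k + 1)

noncomputable def VV (k n : ℕ) : ℝ :=
  ∑ j ∈ Finset.range n, (-1 : ℝ) ^ j * (n.choose (j + 1)) / ((j : ℝ) + 1) ^ k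

lemma UU_eq (k n : ℕ) : UU k n = VV k (n + 1) / ((n : ℝ) + 1) := by
  unfold UU VV
  rw [Finset.sum_div]
  refine Finset.sum_congr rfl fun j _ => ?_
  have h := Nat.add_one_mul_choose_eq n j
  have h' : ((n : ℝ) + 1) * (n.choose j) = ((n + 1).choose (j + 1)) * ((j : ℝ) + 1) := by
    exact_mod_cast h
  have h1 : (n : ℝ) + 1 ≠ 0 := by positivity
  have h2 : (j : ℝ) + 1 ≠ 0 := by positivity
  rw [div_div, div_eq_div_iff (by positivity) (by positivity), pow_succ]
  linear_combination (-1 : ℝ) ^ j * ((j : ℝ) + 1) ^ k * h'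

lemma VV_succ (k n : ℕ) : VV (k + 1) (n + 1) = VV (k + 1) n + UU k n := by
  unfold UU VV
  have : ∑ j ∈ Finset.range n, (-1 : ℝ) ^ j * (n.choose (j + 1)) / ((j : ℝ) + 1) ^ (k + 1)
      = ∑ j ∈ Finset.range (n + 1),
        (-1 : ℝ) ^ j * (n.choose (j + 1)) / ((j : ℝ) + 1) ^ (k + 1) := by
    rw [Finset.sum_range_succ]; simp
  rw [this, ← Finset.sum_add_distrib]
  refine Finset.sum_congr rfl fun j _ => ?_
  rw [Nat.choose_succ_succ]
  push_cast
  ring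

lemma VV_zero (n : ℕ) : VV 0 (n + 1) = 1 := by
  have h := Int.alternating_sum_range_choose (n := n + 1)
  rw [Finset.sum_range_succ'] at h
  simp only [Nat.choose_zero_right, pow_succ] at h
  have h' : (∑ j ∈ Finset.range (n + 1), (-1 : ℝ) ^ j * -1 * ((n + 1).choose (j + 1))) + 1 = 0 := by
    have := congrArg (fun z : ℤ => (z : ℝ)) h
    simpa using this
  unfold VV
  have : ∑ j ∈ Finset.range (n + 1), (-1 : ℝ) ^ j * -1 * ((n + 1).choose (j + 1))
    = - ∑ j ∈ Finset.range (n + 1), (-1 : ℝ) ^ j * ((n + 1).choose (j + 1)) / ((j : ℝ) + 1) ^ 0 := by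
    rw [← Finset.sum_neg_distrib]
    refine Finset.sum_congr rfl fun j _ => by ring
  linarith

lemma VV_eq (k : ℕ) : ∀ n, VV k (n + 1) = SS k (n + 1) := by
  induction k with
  | zero => intro n; rw [VV_zero]; simp [SS]
  | succ k ih =>
    have : ∀ n, VV (k + 1) n = SS (k + 1) n := by
      intro n
      induction n with
      | zero => simp [VV, SS]
      | succ n ihn =>
        rw [VV_succ, ihn, UU_eq, ih]
        simp only [SS, Finset.sum_range_succ]
    intro n
    exact this _

lemma hasSum_choose_geom (x : ℝ) (h0 : 0 ≤ x) (h1 : x < 1) (j : ℕ) :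
    HasSum (fun n : ℕ => (n.choose j : ℝ) * x ^ (n + 1)) ((x / (1 - x)) ^ (j + 1)) := by
  have h := hasSum_choose_mul_geometric_of_norm_lt_one (𝕜 := ℝ) j (r := x)
    (by rw [Real.norm_eq_abs, abs_of_nonneg h0]; exact h1)
  have h2 := h.mul_left (x ^ (j + 1))
  rw [← hasSum_nat_add_iff' j]
  have h3 : ∑ i ∈ Finset.range j, (i.choose j : ℝ) * x ^ (i + 1) = 0 := by
    refine Finset.sum_eq_zero fun i hi => ?_
    rw [Nat.choose_eq_zero_of_lt (Finset.mem_range.1 hi)]; simp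
  rw [h3, sub_zero, div_pow]
  have e1 : x ^ (j + 1) / (1 - x) ^ (j + 1) = x ^ (j + 1) * (1 / (1 - x) ^ (j + 1)) := by
    rw [mul_one_div]
  rw [e1]
  have e2 : (fun n : ℕ => ((n + j).choose j : ℝ) * x ^ (n + j + 1)) =
      fun i : ℕ => x ^ (j + 1) * (((i + j).choose j : ℝ) * x ^ i) := by
    funext n
    rw [pow_add, pow_add, pow_add]
    ac_rfl
  rw [e2]
  exact h2

lemma analytic_part (s : ℕ) (hs : 2 ≤ s) (p : ℝ) (hp1 : 1 / 2 ≤ p) (hp2 : p < 1) :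
    ∑' n : ℕ, (1 - p) ^ (n + 1) / ((n : ℝ) + 1) * SS (s - 1) (n + 1) = -Li s (1 - 1 / p) := by
  set x := 1 - p with hx
  have hp0 : 0 < p := by linarith
  have hx0 : 0 ≤ x := by linarith
  have hx1 : x < 1 := by linarith
  have hy : 1 - 1 / p = -(x / (1 - x)) := by
    have : 1 - x = p := by rw [hx]; ring
    rw [this, hx]; field_simp; ring
  have hy1 : x / (1 - x) ≤ 1 := by rw [div_le_one (by linarith)]; linarith
  have hy0 : 0 ≤ x / (1 - x) := div_nonneg hx0 (by linarith)
  set a : ℕ → ℕ → ℝ := fun j n => (-1 : ℝ) ^ j / ((j : ℝ) + 1) ^ s * ((n.choose j : ℝ) * x ^ (n + 1)) with ha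
  have hrow : ∀ j, HasSum (a j) ((-1 : ℝ) ^ j / ((j : ℝ) + 1) ^ s * (x / (1 - x)) ^ (j + 1)) :=
    fun j => (hasSum_choose_geom x hx0 hx1 j).mul_left _
  have hnorm : ∀ j n, ‖a j n‖ = 1 / ((j : ℝ) + 1) ^ s * ((n.choose j : ℝ) * x ^ (n + 1)) := by
    intro j n
    have hj : 0 ≤ (j : ℝ) + 1 := by positivity
    simp only [ha, norm_mul, norm_div, norm_pow, norm_neg, norm_one, one_pow, Real.norm_eq_abs,
      abs_of_nonneg hx0, abs_of_nonneg hj, Nat.abs_cast]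
  have hsum : Summable (Function.uncurry a) := by
    apply Summable.of_norm
    rw [summable_prod_of_nonneg (fun _ => norm_nonneg _)]
    have hr : ∀ j, HasSum (fun n => ‖a j n‖) (1 / ((j : ℝ) + 1) ^ s * (x / (1 - x)) ^ (j + 1)) := by
      intro j
      simp only [hnorm]
      exact (hasSum_choose_geom x hx0 hx1 j).mul_left _
    refine ⟨fun j => (hr j).summable, ?_⟩
    have : (fun j => ∑' n, ‖Function.uncurry a (j, n)‖) =
        fun j : ℕ => 1 / ((j : ℝ) + 1) ^ s * (x / (1 - x)) ^ (j + 1) := by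
      ext j; exact (hr j).tsum_eq
    rw [this]
    have hb : Summable (fun j : ℕ => 1 / ((j : ℝ) + 1) ^ s) := by
      have := (summable_nat_add_iff 1).2 (Real.summable_one_div_nat_pow.2 (show 1 < s by omega))
      simpa using this
    refine Summable.of_nonneg_of_le (fun j => by positivity) (fun j => ?_) hb
    exact mul_le_of_le_one_right (by positivity) (pow_le_one₀ hy0 hy1)
  have hcomm := hsum.tsum_comm
  have hR : ∑' j, ∑' n, a j n = -Li s (1 - 1 / p) := by
    unfold Li
    rw [← tsum_neg, hy]
    refine tsum_congr fun j => ?_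
    rw [(hrow j).tsum_eq, neg_pow (x / (1 - x)), pow_succ (-1 : ℝ)]
    ring
  rw [← hR, ← hcomm]
  refine tsum_congr fun n => ?_
  rw [tsum_eq_sum (s := Finset.range (n + 1))]
  · have := UU_eq (s - 1) n
    rw [VV_eq] at this
    have e : x ^ (n + 1) / ((n : ℝ) + 1) * SS (s - 1) (n + 1) = x ^ (n + 1) * UU (s - 1) n := by
      rw [this]; ring
    rw [e]
    unfold UU
    rw [Finset.mul_sum, Nat.sub_add_cancel (by omega)]
    refine Finset.sum_congr rfl fun j _ => ?_
    simp only [ha]; ring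
  · intro j hj
    simp only [ha]
    rw [Nat.choose_eq_zero_of_lt (by simpa using hj)]; simp

open Classical in
/-- Bounded weakly decreasing tuples of positive integers. -/
def PP (d N : ℕ) (m : Fin d → ℕ) : Prop :=
  ((∀ i j, i ≤ j → m j ≤ m i) ∧ ∀ i, 1 ≤ m i) ∧ ∀ i, m i ≤ N

def QQ (d : ℕ) (m : Fin d → ℕ) : Prop :=
  (∀ i j, i ≤ j → m j ≤ m i) ∧ ∀ i, 1 ≤ m i

lemma QQ_cons (d n : ℕ) (m : Fin d → ℕ) :
    QQ (d + 1) (Fin.cons n m) ↔ 1 ≤ n ∧ PP d n m := by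
  unfold QQ PP
  constructor
  · rintro ⟨h1, h2⟩
    refine ⟨by simpa using h2 0, ⟨fun i j hij => ?_, fun i => by simpa using h2 i.succ⟩, fun i => ?_⟩
    · simpa using h1 i.succ j.succ (by simpa using hij)
    · simpa using h1 0 i.succ (Fin.zero_le _)
  · rintro ⟨hn, ⟨h1, h2⟩, h3⟩
    refine ⟨fun i j => ?_, fun i => ?_⟩
    · refine Fin.cases ?_ (fun i => ?_) i <;> refine Fin.cases ?_ (fun j => ?_) j
      · simp
      · intro _; simpa using h3 j
      · intro h; simp at h
      · intro h; simpa using h1 i j (by simpa using h)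
    · refine Fin.cases ?_ (fun i => ?_) i
      · simpa using hn
      · simpa using h2 i

open Classical in
noncomputable def EE (d N : ℕ) : ENNReal :=
  ∑' m : Fin d → ℕ, if PP d N m then ∏ i, (m i : ENNReal)⁻¹ else 0

open Classical in
lemma tsum_QQ (d : ℕ) (w : ℕ → ENNReal) :
    (∑' m : Fin (d + 1) → ℕ, if QQ (d + 1) m then w (m 0) * ∏ i : Fin d, (m i.succ : ENNReal)⁻¹ else 0)
      = ∑' n, w (n + 1) * EE d (n + 1) := by
  rw [← (Fin.consEquiv (fun _ : Fin (d + 1) => ℕ)).tsum_eq]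
  rw [ENNReal.tsum_prod', tsum_eq_zero_add' ENNReal.summable]
  simp only [Fin.consEquiv, Equiv.coe_fn_mk, QQ_cons, Fin.cons_zero, Fin.cons_succ]
  have h01 : ¬ (1 ≤ 0) := by omega
  simp only [h01, false_and, if_false, tsum_zero, zero_add]
  refine tsum_congr fun n => ?_
  unfold EE
  rw [← ENNReal.tsum_mul_left]
  refine tsum_congr fun m => ?_
  simp

lemma EE_eq (d : ℕ) : ∀ N, EE d N = ENNReal.ofReal (SS d N) := by
  classical
  induction d with
  | zero => intro N; simp [EE, SS, PP]
  | succ d ih =>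
    intro N
    have h := tsum_QQ d (fun n => if n ≤ N then (n : ENNReal)⁻¹ else 0)
    have h2 : EE (d + 1) N = ∑' m : Fin (d + 1) → ℕ, if QQ (d + 1) m then
        (if m 0 ≤ N then (m 0 : ENNReal)⁻¹ else 0) * ∏ i : Fin d, (m i.succ : ENNReal)⁻¹ else 0 := by
      unfold EE
      refine tsum_congr fun m => ?_
      by_cases hQ : QQ (d + 1) m
      · by_cases h0 : m 0 ≤ N
        · have : PP (d + 1) N m := ⟨hQ, fun i => (hQ.1 0 i (Fin.zero_le _)).trans h0⟩
          rw [if_pos this, if_pos hQ, if_pos h0, Fin.prod_univ_succ]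
        · have : ¬ PP (d + 1) N m := fun h => h0 (h.2 0)
          rw [if_neg this, if_pos hQ, if_neg h0, zero_mul]
      · have : ¬ PP (d + 1) N m := fun h => hQ h.1
        rw [if_neg this, if_neg hQ]
    rw [h2, h, tsum_eq_sum (s := Finset.range N)]
    · simp only [SS]
      rw [ENNReal.ofReal_sum_of_nonneg (fun i _ => div_nonneg (SS_nonneg _ _) (by positivity))]
      refine Finset.sum_congr rfl fun i hi => ?_
      have hi' : i + 1 ≤ N := Finset.mem_range.1 hi
      rw [if_pos hi', ih, ENNReal.ofReal_div_of_pos (by positivity), div_eq_mul_inv, mul_comm]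
      congr 2
      rw [← ENNReal.ofReal_natCast]; push_cast; rfl
    · intro i hi
      have : ¬ (i + 1 ≤ N) := by simpa using hi
      rw [if_neg this, zero_mul]

lemma comb_part (d : ℕ) (x : ℝ) (hx : 0 ≤ x) :
    (∑' m : {m : Fin (d + 1) → ℕ // QQ (d + 1) m},
      (x ^ m.1 0 / (m.1 0 : ℝ)) * ∏ i : Fin d, (m.1 i.succ : ℝ)⁻¹)
      = ∑' n : ℕ, x ^ (n + 1) / ((n : ℝ) + 1) * SS d (n + 1) := by
  classical
  have h := tsum_QQ d (fun n => ENNReal.ofReal (x ^ n / n))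
  have hR : ∑' n : ℕ, x ^ (n + 1) / ((n : ℝ) + 1) * SS d (n + 1) =
      (∑' n : ℕ, ENNReal.ofReal (x ^ (n + 1) / ((n + 1 : ℕ) : ℝ)) * EE d (n + 1)).toReal := by
    rw [ENNReal.tsum_toReal_eq]
    · refine tsum_congr fun n => ?_
      rw [EE_eq, ENNReal.toReal_mul, ENNReal.toReal_ofReal (by positivity),
        ENNReal.toReal_ofReal (SS_nonneg _ _)]
      push_cast; rfl
    · intro n
      rw [EE_eq]
      exact ENNReal.mul_ne_top ENNReal.ofReal_ne_top ENNReal.ofReal_ne_top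
  rw [hR, ← h]
  have h3 : (∑' m : Fin (d + 1) → ℕ, if QQ (d + 1) m then
      ENNReal.ofReal (x ^ m 0 / m 0) * ∏ i : Fin d, (m i.succ : ENNReal)⁻¹ else 0) =
      ∑' m : {m : Fin (d + 1) → ℕ // QQ (d + 1) m},
        ENNReal.ofReal (x ^ m.1 0 / m.1 0) * ∏ i : Fin d, (m.1 i.succ : ENNReal)⁻¹ := by
    have := tsum_subtype {m : Fin (d + 1) → ℕ | QQ (d + 1) m}
      (fun m => ENNReal.ofReal (x ^ m 0 / m 0) * ∏ i : Fin d, (m i.succ : ENNReal)⁻¹)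
    refine Eq.trans ?_ this.symm
    refine tsum_congr fun m => ?_
    simp [Set.indicator_apply]
  rw [h3, ENNReal.tsum_toReal_eq]
  · refine tsum_congr fun m => ?_
    rw [ENNReal.toReal_mul, ENNReal.toReal_ofReal (by positivity), ENNReal.toReal_prod]
    simp
  · intro m
    refine ENNReal.mul_ne_top ENNReal.ofReal_ne_top (ENNReal.prod_ne_top fun i _ => ?_)
    have := m.2.2 i.succ
    simp; omega

lemma LiStar_gen (l : List ℕ) (y : List ℝ) (d : ℕ) (hl : l.length = d) (h1 : ∀ i, l.get i = 1) :
    LiStar l y = ∑' m : {m : Fin d → ℕ // QQ d m},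
      ∏ i : Fin d, y.getD (i : ℕ) 0 ^ m.1 i / (m.1 i : ℝ) := by
  subst hl
  unfold LiStar
  simp only [h1, pow_one]
  rfl

/-- Reduction of `Li*_{{1}_s}(1−p, {1}_{s−1})` to a one-dimensional
polylogarithm. -/
theorem stmt_10 (s : ℕ) (hs : 2 ≤ s) (p : ℝ) (hp1 : 1 / 2 ≤ p) (hp2 : p < 1) :
    LiStar (List.replicate s 1) ((1 - p) :: List.replicate (s - 1) (1 : ℝ)) =
      -Li s (1 - 1 / p) := by
  rw [← analytic_part s hs p hp1 hp2, ← comb_part _ _ (by linarith)]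
  obtain ⟨d, rfl⟩ : ∃ d, s = d + 1 := ⟨s - 1, by omega⟩
  rw [LiStar_gen _ _ (d + 1) (by simp) (by simp)]
  simp only [Nat.add_sub_cancel]
  refine tsum_congr fun m => ?_
  rw [Fin.prod_univ_succ]
  simp only [Fin.val_zero, Fin.val_succ, List.getD_cons_zero, List.getD_cons_succ]
  congr 1
  refine Finset.prod_congr rfl fun i _ => ?_
  have : (List.replicate d (1 : ℝ)).getD (i : ℕ) 0 = 1 := by
    simp [List.getD_eq_getElem?_getD, List.getElem?_replicate]
  rw [this]; simp
end

section
/- Let s ∈ ℕ with s ≥ 2, and let a, p ∈ ℝ with |a| ≤ 1 and 1/2 ≤ p < 1. Then Li*_{{1}_s}(1−p, {1}_{s−2}, 1 + ap/(1−p)) = Li_s(a) − Li_s(1 − 1/p), where Li_s(x) = Σ_{n≥1} x^n/n^s is the one-dimensional polylogarithm. -/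
/-- Finite set of antitone positive tuples with first entry `N`. -/
def FT : (r : ℕ) → ℕ → Finset (Fin (r + 1) → ℕ)
  | 0, N => {fun _ => N}
  | r + 1, N => (Finset.Icc 1 N).biUnion (fun n => (FT r n).image (fun m => (Fin.cons N m : Fin (r + 2) → ℕ)))

theorem mem_FT (r : ℕ) : ∀ (N : ℕ), 1 ≤ N → ∀ m : Fin (r + 1) → ℕ, m ∈ FT r N ↔
    m 0 = N ∧ (∀ i j : Fin (r + 1), i ≤ j → m j ≤ m i) ∧ ∀ i, 1 ≤ m i := by
  induction r with
  | zero =>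
    intro N hN m
    simp only [FT, Finset.mem_singleton]
    constructor
    · rintro rfl
      simp [hN]
    · rintro ⟨h, -, -⟩
      funext i
      have : i = 0 := Fin.fin_one_eq_zero i
      rw [this, h]
  | succ r ih =>
    intro N hN m
    simp only [FT, Finset.mem_biUnion, Finset.mem_Icc, Finset.mem_image]
    constructor
    · rintro ⟨n, ⟨h1, h2⟩, m', hm', rfl⟩
      obtain ⟨h0, ha, hp⟩ := (ih n h1 m').1 hm'
      refine ⟨rfl, ?_, ?_⟩
      · intro i j hij
        induction j using Fin.cases with
        | zero =>
          have : i = 0 := by simpa using hij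
          rw [this]
        | succ j =>
          induction i using Fin.cases with
          | zero =>
            simp only [Fin.cons_succ, Fin.cons_zero]
            have := ha 0 j (Fin.zero_le _)
            omega
          | succ i =>
            simp only [Fin.cons_succ]
            exact ha i j (by simpa using hij)
      · intro i
        induction i using Fin.cases with
        | zero => simpa using hN
        | succ i => simpa using hp i
    · rintro ⟨h0, ha, hp⟩
      refine ⟨m 1, ⟨hp 1, h0 ▸ ha 0 1 (Fin.zero_le _)⟩, Fin.tail m, ?_, ?_⟩
      · refine (ih _ (hp 1) _).2 ⟨rfl, ?_, ?_⟩
        · intro i j hij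
          exact ha _ _ (by simpa using hij)
        · intro i
          exact hp _
      · rw [← h0]
        exact Fin.cons_self_tail m

/-- Weighted sum over the tuples with first entry `N`. -/
noncomputable def WT (y : ℝ) (r N : ℕ) : ℝ :=
  ∑ m ∈ FT r N, y ^ m (Fin.last r) * ∏ i, (1 / (m i : ℝ))

theorem WT_zero (y : ℝ) (N : ℕ) : WT y 0 N = y ^ N / N := by
  simp [WT, FT, div_eq_mul_inv]

theorem WT_succ (y : ℝ) (r N : ℕ) :
    WT y (r + 1) N = 1 / N * ∑ n ∈ Finset.Icc 1 N, WT y r n := by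
  unfold WT
  rw [FT, Finset.sum_biUnion, Finset.mul_sum]
  · refine Finset.sum_congr rfl fun n _ => ?_
    rw [Finset.sum_image, Finset.mul_sum]
    · refine Finset.sum_congr rfl fun m _ => ?_
      rw [Fin.prod_univ_succ, ← Fin.succ_last]
      simp only [Fin.cons_succ, Fin.cons_zero]
      ring
    · intro a _ b _ h
      exact Fin.cons_right_injective (α := fun _ => ℕ) _ h
  · intro n hn n' hn' hne
    simp only [Finset.coe_Icc, Set.mem_Icc] at hn hn'
    rw [Function.onFun, Finset.disjoint_left]
    intro m h1 h2
    simp only [Finset.mem_image] at h1 h2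
    obtain ⟨m1, hm1, rfl⟩ := h1
    obtain ⟨m2, hm2, h⟩ := h2
    have h := Fin.cons_right_injective (α := fun _ => ℕ) _ h
    subst h
    exact hne (((mem_FT r n hn.1 _).1 hm1).1.symm.trans ((mem_FT r n' hn'.1 _).1 hm2).1)

theorem choose_div_s11 (i j : ℕ) :
    (1 / ((i + 1 : ℕ) : ℝ)) * ((i + 1).choose (j + 1) : ℝ) = (i.choose j : ℝ) / (j + 1) := by
  have h := Nat.add_one_mul_choose_eq i j
  have h' : ((i : ℝ) + 1) * (i.choose j : ℝ) = ((i + 1).choose (j + 1) : ℝ) * (j + 1) := by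
    exact_mod_cast h
  push_cast
  field_simp
  linarith

theorem WT_eq (y : ℝ) (r : ℕ) : ∀ (i M : ℕ), i < M → WT y r (i + 1) =
    ∑ j ∈ Finset.range M, (-1) ^ j * (1 - (1 - y) ^ (j + 1)) * (i.choose j : ℝ) / (j + 1 : ℝ) ^ (r + 1) := by
  induction r with
  | zero =>
    intro i M hM
    have hs : ∑ j ∈ Finset.range M, (-1) ^ j * (1 - (1 - y) ^ (j + 1)) * (i.choose j : ℝ) / (j + 1 : ℝ) ^ (0 + 1)
      = ∑ j ∈ Finset.range (i + 1), (-1) ^ j * (1 - (1 - y) ^ (j + 1)) * (i.choose j : ℝ) / (j + 1 : ℝ) ^ (0 + 1) := by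
      symm
      refine Finset.sum_subset (by simpa using hM) ?_
      intro j _ hj
      rw [Nat.choose_eq_zero_of_lt (by simpa using hj)]
      simp
    rw [hs, WT_zero]
    have key : ∀ z : ℝ, ∑ j ∈ Finset.range (i + 1), (-1 : ℝ) ^ j * z ^ (j + 1) * ((i + 1).choose (j + 1) : ℝ)
        = 1 - (1 - z) ^ (i + 1) := by
      intro z
      have := add_pow (-z) 1 (i + 1)
      rw [Finset.sum_range_succ'] at this
      simp only [one_pow, mul_one, pow_zero, Nat.choose_zero_right, Nat.cast_one] at this
      have h2 : (1 - z) ^ (i + 1) = (-z + 1) ^ (i + 1) := by ring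
      rw [h2, this]
      rw [sub_add_eq_sub_sub_swap, sub_self, zero_sub, ← Finset.sum_neg_distrib]
      refine Finset.sum_congr rfl fun j _ => ?_
      rw [neg_pow z]
      ring
    have k1 := key 1
    have k2 := key (1 - y)
    have : ∀ j ∈ Finset.range (i + 1), (-1) ^ j * (1 - (1 - y) ^ (j + 1)) * (i.choose j : ℝ) / (j + 1 : ℝ) ^ (0 + 1)
       = (1 / ((i + 1 : ℕ) : ℝ)) * ((-1 : ℝ) ^ j * 1 ^ (j + 1) * ((i + 1).choose (j + 1) : ℝ)
        - (-1 : ℝ) ^ j * (1 - y) ^ (j + 1) * ((i + 1).choose (j + 1) : ℝ)) := by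
      intro j _
      have := choose_div_s11 i j
      rw [zero_add, pow_one, mul_div_assoc, ← this]
      ring
    rw [Finset.sum_congr rfl this, ← Finset.mul_sum, Finset.sum_sub_distrib, k1, k2]
    simp
    ring
  | succ r ih =>
    intro i M hM
    rw [WT_succ]
    have h1 : ∑ n ∈ Finset.Icc 1 (i + 1), WT y r n = ∑ n ∈ Finset.range (i + 1), WT y r (n + 1) := by
      rw [Finset.range_eq_Ico, Finset.sum_Ico_add' (fun n => WT y r n) 0 (i + 1) 1]
      rfl
    rw [h1]
    have h2 : ∀ n ∈ Finset.range (i + 1), WT y r (n + 1) = _ := fun n hn =>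
      ih n M (by have := Finset.mem_range.1 hn; omega)
    rw [Finset.sum_congr rfl h2, Finset.sum_comm, Finset.mul_sum]
    refine Finset.sum_congr rfl fun j _ => ?_
    have h3 : ∑ n ∈ Finset.range (i + 1), (n.choose j : ℝ) = ((i + 1).choose (j + 1) : ℝ) := by
      clear h1 h2 hM
      generalize i + 1 = k
      induction k with
      | zero => simp
      | succ k ihk =>
        rw [Finset.sum_range_succ, ihk, Nat.choose_succ_succ]
        push_cast
        ring
    rw [← Finset.sum_div, ← Finset.mul_sum, h3]
    have := choose_div_s11 i j
    calc _ = (-1) ^ j * (1 - (1 - y) ^ (j + 1)) * ((1 / ((i + 1 : ℕ) : ℝ)) * ((i + 1).choose (j + 1) : ℝ)) / (j + 1 : ℝ) ^ (r + 1) := by ring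
      _ = _ := by
        rw [this, pow_succ _ (r + 1)]
        have : (j + 1 : ℝ) ≠ 0 := by positivity
        field_simp

theorem hasSum_choose (q : ℝ) (h0 : 0 < q) (h1 : q < 1) (j : ℕ) :
    HasSum (fun i : ℕ => (i.choose j : ℝ) * q ^ (i + 1)) ((q / (1 - q)) ^ (j + 1)) := by
  have h := hasSum_choose_mul_geometric_of_norm_lt_one j (r := q) (by rw [Real.norm_eq_abs, abs_of_pos h0]; exact h1)
  have h' := h.mul_right (q ^ (j + 1))
  have e : 1 / (1 - q) ^ (j + 1) * q ^ (j + 1) = (q / (1 - q)) ^ (j + 1) := by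
    rw [div_pow]; ring
  rw [e] at h'
  rw [← hasSum_nat_add_iff' j]
  have z : ∑ i ∈ Finset.range j, (i.choose j : ℝ) * q ^ (i + 1) = 0 := by
    refine Finset.sum_eq_zero fun i hi => ?_
    rw [Nat.choose_eq_zero_of_lt (by simpa using hi)]
    simp
  rw [z, sub_zero]
  have e2 : (fun i : ℕ => ((i + j).choose j : ℝ) * q ^ (i + j + 1))
      = fun i : ℕ => ((i + j).choose j : ℝ) * q ^ i * q ^ (j + 1) := by
    funext n
    ring
  rw [e2]
  exact h'

theorem summable_Li (s : ℕ) (hs : 2 ≤ s) (b : ℝ) (hb : |b| ≤ 1) :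
    Summable (fun n : ℕ => b ^ (n + 1) / (n + 1 : ℝ) ^ s) := by
  have h : Summable (fun n : ℕ => 1 / ((n : ℝ)) ^ s) :=
    Real.summable_one_div_nat_pow.2 (by omega)
  have h := (summable_nat_add_iff 1).2 h
  refine Summable.of_norm_bounded h fun n => ?_
  rw [norm_div, norm_pow, norm_pow, Real.norm_eq_abs, Real.norm_eq_abs]
  have : |(n : ℝ) + 1| = n + 1 := abs_of_nonneg (by positivity)
  rw [this]
  push_cast
  gcongr
  exact pow_le_one₀ (abs_nonneg _) hb

theorem hasSum_W (r : ℕ) (hr : 1 ≤ r) (a p : ℝ) (ha : |a| ≤ 1)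
    (hp1 : 1 / 2 ≤ p) (hp2 : p < 1) :
    HasSum (fun i : ℕ => (1 - p) ^ (i + 1) * WT (1 + a * p / (1 - p)) r (i + 1))
      (Li (r + 1) a - Li (r + 1) (1 - 1 / p)) := by
  have hq : 0 < 1 - p := by linarith
  have hp : 0 < p := by linarith
  have hb : |1 - 1 / p| ≤ 1 := by
    have : 1 / p ≤ 2 := by rw [div_le_iff₀ hp]; linarith
    have : 1 ≤ 1 / p := by rw [le_div_iff₀ hp]; linarith
    rw [abs_le]; constructor <;> linarith
  set x : ℝ := 1 - (1 + a * p / (1 - p)) with hx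
  have hin : ∀ j : ℕ, HasSum (fun i : ℕ => (i.choose j : ℝ) * (1 - p) ^ (i + 1)) (((1 - p) / p) ^ (j + 1)) := by
    intro j
    have := hasSum_choose (1 - p) hq (by linarith) j
    rwa [show 1 - (1 - p) = p by ring] at this
  have hxq : x * ((1 - p) / p) = - a := by
    rw [hx]; field_simp; ring
  have hqp : (1 - p) / p = - (1 - 1 / p) := by field_simp; ring
  have hqp0 : 0 < (1 - p) / p := by positivity
  let u : ℕ × ℕ → ℝ := fun t => (-1) ^ t.1 * (1 - x ^ (t.1 + 1)) / (t.1 + 1 : ℝ) ^ (r + 1) * ((t.2.choose t.1 : ℝ) * (1 - p) ^ (t.2 + 1))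
  let v : ℕ × ℕ → ℝ := fun t => (1 + |x| ^ (t.1 + 1)) / (t.1 + 1 : ℝ) ^ (r + 1) * ((t.2.choose t.1 : ℝ) * (1 - p) ^ (t.2 + 1))
  have hv : Summable v := by
    refine (summable_prod_of_nonneg ?_).2 ⟨?_, ?_⟩
    · intro t
      simp only [v, Pi.zero_apply]
      positivity
    · intro j
      exact ((hin j).mul_left ((1 + |x| ^ (j + 1)) / (j + 1 : ℝ) ^ (r + 1))).summable
    · have e : ∀ j : ℕ, ∑' i, v (j, i) = ((1 - p) / p) ^ (j + 1) / (j + 1 : ℝ) ^ (r + 1) + |a| ^ (j + 1) / (j + 1 : ℝ) ^ (r + 1) := by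
        intro j
        refine ((hin j).mul_left ((1 + |x| ^ (j + 1)) / (j + 1 : ℝ) ^ (r + 1))).tsum_eq.trans ?_
        have : |a| = |x| * ((1 - p) / p) := by
          rw [← abs_neg a, ← hxq, abs_mul, abs_of_pos hqp0]
        rw [this, mul_pow]
        ring
      simp only [e]
      refine (summable_Li (r + 1) (by omega) _ ?_).add (summable_Li (r + 1) (by omega) _ ?_)
      · rw [hqp, abs_neg]; exact hb
      · rwa [abs_abs]
  have hu : Summable u := by
    refine Summable.of_norm_bounded hv fun t => ?_
    simp only [u, v]
    rw [norm_mul, norm_div, norm_mul, norm_pow, norm_neg, norm_one, one_pow, one_mul]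
    rw [Real.norm_of_nonneg (r := (t.1 + 1 : ℝ) ^ (r + 1)) (by positivity), Real.norm_of_nonneg (r := (t.2.choose t.1 : ℝ) * (1 - p) ^ (t.2 + 1)) (by positivity)]
    gcongr
    refine (norm_sub_le _ _).trans ?_
    rw [norm_one, norm_pow, Real.norm_eq_abs]
  have hval : ∑' t, u t = Li (r + 1) a - Li (r + 1) (1 - 1 / p) := by
    rw [hu.tsum_prod, Li, Li, ← (summable_Li (r + 1) (by omega) _ ha).tsum_sub (summable_Li (r + 1) (by omega) _ hb)]
    refine tsum_congr fun j => ?_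
    refine ((hin j).mul_left ((-1) ^ j * (1 - x ^ (j + 1)) / (j + 1 : ℝ) ^ (r + 1))).tsum_eq.trans ?_
    have h1 : a ^ (j + 1) = (-1) ^ (j + 1) * (x ^ (j + 1) * ((1 - p) / p) ^ (j + 1)) := by
      rw [← mul_pow, hxq, ← mul_pow]; ring
    have h2 : (1 - 1 / p) ^ (j + 1) = (-1) ^ (j + 1) * ((1 - p) / p) ^ (j + 1) := by
      rw [hqp, ← mul_pow]; ring
    rw [h1, h2]
    ring
  have hsw : HasSum (fun t : ℕ × ℕ => u t.swap) (Li (r + 1) a - Li (r + 1) (1 - 1 / p)) := by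
    rw [← hval]
    exact (Equiv.prodComm ℕ ℕ).hasSum_iff.2 hu.hasSum
  refine hsw.prod_fiberwise fun i => ?_
  have hz : ∀ j ∉ Finset.range (i + 1), u (Prod.swap (i, j)) = 0 := by
    intro j hj
    simp only [u, Prod.swap]
    rw [Nat.choose_eq_zero_of_lt (by simpa using hj)]
    simp
  have hfin : HasSum (fun j => u (Prod.swap (i, j))) (∑ j ∈ Finset.range (i + 1), u (Prod.swap (i, j))) :=
    hasSum_sum_of_ne_finset_zero hz
  convert hfin using 1
  rw [WT_eq _ r i (i + 1) (by omega), Finset.mul_sum]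
  refine Finset.sum_congr rfl fun j _ => ?_
  simp only [u, Prod.swap, ← hx]
  ring

/-- Antitone positive tuples. -/
abbrev AT (n : ℕ) := {m : Fin n → ℕ // (∀ i j : Fin n, i ≤ j → m j ≤ m i) ∧ ∀ i, 1 ≤ m i}

theorem LiStar_eq (l : List ℕ) (x : List ℝ) (n : ℕ) (hn : l.length = n) (hl : ∀ i, l.get i = 1) :
    LiStar l x = ∑' m : AT n, ∏ i : Fin n, x.getD (i : ℕ) 0 ^ m.1 i / (m.1 i : ℝ) := by
  unfold LiStar
  have : l.get = fun _ => 1 := funext hl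
  rw [this]
  simp only [pow_one]
  clear this hl
  generalize l.length = k at hn
  subst hn
  rfl

/-- Tuples as a disjoint union of the finite sets with fixed first entry. -/
noncomputable def eqv (r : ℕ) : (Σ i : ℕ, ↥(FT r (i + 1))) ≃ AT (r + 1) :=
  Equiv.ofBijective (fun t => ⟨t.2.1, ((mem_FT r (t.1 + 1) (by omega) _).1 t.2.2).2⟩) (by
    constructor
    · rintro ⟨i, m, hm⟩ ⟨i', m', hm'⟩ h
      simp only [Subtype.mk.injEq] at h
      subst h
      have h1 := ((mem_FT r (i + 1) (by omega) _).1 hm).1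
      have h2 := ((mem_FT r (i' + 1) (by omega) _).1 hm').1
      have : i = i' := by omega
      subst this
      rfl
    · rintro ⟨m, h1, h2⟩
      have h0 := h2 0
      refine ⟨⟨m 0 - 1, m, (mem_FT r _ (by omega) _).2 ⟨by omega, h1, h2⟩⟩, rfl⟩)

theorem fiber_sum (r : ℕ) (q y : ℝ) (i : ℕ) :
    ∑ m : ↥(FT r (i + 1)), q ^ (m.1 0) * (y ^ m.1 (Fin.last r) * ∏ k, (1 / (m.1 k : ℝ)))
      = q ^ (i + 1) * WT y r (i + 1) := by
  rw [WT, Finset.mul_sum, ← Finset.sum_coe_sort (FT r (i + 1))]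
  refine Finset.sum_congr rfl fun m _ => ?_
  rw [((mem_FT r (i + 1) (by omega) _).1 m.2).1]

theorem tsum_AT (r : ℕ) (hr : 1 ≤ r) (a p : ℝ) (ha : |a| ≤ 1)
    (hp1 : 1 / 2 ≤ p) (hp2 : p < 1) :
    ∑' m : AT (r + 1), (1 - p) ^ (m.1 0) * ((1 + a * p / (1 - p)) ^ m.1 (Fin.last r) * ∏ k, (1 / (m.1 k : ℝ)))
      = Li (r + 1) a - Li (r + 1) (1 - 1 / p) := by
  have hq : 0 < 1 - p := by linarith
  have hp : 0 < p := by linarith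
  let f : ℝ → (Σ i : ℕ, ↥(FT r (i + 1))) → ℝ := fun y t =>
    (1 - p) ^ (t.2.1 0) * (y ^ t.2.1 (Fin.last r) * ∏ k, (1 / (t.2.1 k : ℝ)))
  have hy1 : 1 + 1 * p / (1 - p) = 1 / (1 - p) := by field_simp; ring
  have hdom : Summable (f (1 + 1 * p / (1 - p))) := by
    refine (summable_sigma_of_nonneg ?_).2 ⟨?_, ?_⟩
    · intro t
      simp only [f]
      rw [hy1]
      positivity
    · intro i
      exact Summable.of_finite
    · have := (hasSum_W r hr 1 p (by simp) hp1 hp2).summable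
      refine this.congr fun i => ?_
      rw [tsum_fintype]
      exact (fiber_sum r _ _ i).symm
  have hyle : |1 + a * p / (1 - p)| ≤ 1 + 1 * p / (1 - p) := by
    rw [hy1, show 1 + a * p / (1 - p) = (1 - p + a * p) / (1 - p) by field_simp, abs_div, abs_of_pos hq]
    gcongr
    obtain ⟨h1, h2⟩ := abs_le.1 ha
    rw [abs_le]
    constructor <;> nlinarith
  have hsum : Summable (f (1 + a * p / (1 - p))) := by
    refine Summable.of_norm_bounded hdom fun t => ?_
    simp only [f]
    rw [norm_mul, norm_mul, norm_pow, norm_pow, Real.norm_of_nonneg hq.le,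
      Real.norm_of_nonneg (r := ∏ k, (1 / (t.2.1 k : ℝ))) (by positivity), Real.norm_eq_abs]
    gcongr
  rw [← (eqv r).tsum_eq]
  change ∑' t, f (1 + a * p / (1 - p)) t = _
  rw [hsum.tsum_sigma, ← (hasSum_W r hr a p ha hp1 hp2).tsum_eq]
  refine tsum_congr fun i => ?_
  rw [tsum_fintype]
  exact fiber_sum r _ _ i

theorem stmt_11 (s : ℕ) (hs : 2 ≤ s) (a p : ℝ) (ha : |a| ≤ 1)
    (hp1 : 1 / 2 ≤ p) (hp2 : p < 1) :
    LiStar (List.replicate s 1)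
        ((1 - p) :: (List.replicate (s - 2) (1 : ℝ) ++ [1 + a * p / (1 - p)])) =
      Li s a - Li s (1 - 1 / p) := by
  obtain ⟨r, rfl⟩ : ∃ r, s = r + 2 := ⟨s - 2, by omega⟩
  rw [LiStar_eq _ _ (r + 1 + 1) (by simp) (by intro i; simp), ← tsum_AT (r + 1) (by omega) a p ha hp1 hp2]
  refine tsum_congr fun m => ?_
  simp only [div_eq_mul_inv _ ((m.1 _ : ℕ) : ℝ), one_mul]
  rw [Finset.prod_mul_distrib, ← mul_assoc]
  congr 1
  rw [Fin.prod_univ_succ, Fin.prod_univ_castSucc]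
  have : ∀ i : Fin r, ((1 - p) :: (List.replicate (r + 2 - 2) (1 : ℝ) ++ [1 + a * p / (1 - p)])).getD
      ((i.castSucc.succ : Fin (r + 1 + 1)) : ℕ) 0 = 1 := by
    intro i
    have := i.2
    simp [List.getElem?_append, List.getElem?_replicate]
  simp only [this, one_pow, Finset.prod_const_one, one_mul]
  simp [List.getElem?_append, List.getElem?_replicate]
end

section
/- Let d be a positive integer, let m_1,…,m_d and u_1,…,u_{d−1} be non-negative integers, and set s := (m_1+2, {1}_{u_1}, m_2+2, {1}_{u_2}, …, m_{d−1}+2, {1}_{u_{d−1}}, m_d+2), a tuple of length ‖s‖ := d + u_1 + … + u_{d−1} with weight |s| := s_1 + … + s_{‖s‖}. Let a, p ∈ ℝ with p ≠ 1 and |a| ≤ min(1, 2/p − 1). Then Li*_s({1}_{‖s‖−1}, a) = Li*_{{1}_{|s|}}( ⊔_{i=1}^{d−1}{1−p, {1}_{m_i}, 1/(1−p), {1}_{u_i}}, 1−p, {1}_{m_d}, 1 + ap/(1−p) ) − Li*_{{1}_{|s|}}( ⊔_{i=1}^{d−1}{1−p, {1}_{m_i}, 1/(1−p), {1}_{u_i}},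 1−p, {1}_{m_d+1} ). -/
/-- The exponent tuple `s = (m₁+2, {1}_{u₁}, …, m_d+2, {1}_{u_d}, m_{d+1}+2)`
(here `d+1` plays the role of the paper's `d ≥ 1`). -/
def sTup (d : ℕ) (m : Fin (d + 1) → ℕ) (u : Fin d → ℕ) : List ℕ :=
  (List.ofFn fun i : Fin d => (m i.castSucc + 2) :: List.replicate (u i) 1).flatten ++
    [m (Fin.last d) + 2]

/-- The argument prefix `⊔_{i=1}^{d}{1−p, {1}_{mᵢ}, 1/(1−p), {1}_{uᵢ}}`. -/
noncomputable def xPre (d : ℕ) (m : Fin (d + 1) → ℕ) (u : Fin d → ℕ) (p : ℝ) : List ℝ :=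
  (List.ofFn fun i : Fin d =>
    (1 - p) :: (List.replicate (m i.castSucc) (1 : ℝ) ++
      (1 / (1 - p)) :: List.replicate (u i) (1 : ℝ))).flatten

namespace PolyLogAux

/-- Weakly decreasing tuples of positive integers. -/
abbrev Idx (k : ℕ) : Type :=
  {m : Fin k → ℕ // (∀ i j : Fin k, i ≤ j → m j ≤ m i) ∧ ∀ i, 1 ≤ m i}

/-- First entry of a tuple (`1` for the empty tuple). -/
def hd : (k : ℕ) → (Fin k → ℕ) → ℕ
  | 0, _ => 1
  | _ + 1, m => m 0

lemma hd_pos {k : ℕ} (m : Idx k) : 1 ≤ hd k m.1 := by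
  cases k with
  | zero => exact le_refl _
  | succ k => exact m.2.2 0

lemma le_hd {k : ℕ} (m : Idx k) (i : Fin k) : m.1 i ≤ hd k m.1 := by
  cases k with
  | zero => exact i.elim0
  | succ k => exact m.2.1 0 i (Fin.zero_le i)

lemma hd_le {k : ℕ} (m : Idx (k + 1)) : hd k (Fin.tail m.1) ≤ m.1 0 := by
  cases k with
  | zero => exact m.2.2 0
  | succ k => exact m.2.1 0 1 (Fin.zero_le _)

/-- Adding a new first entry. -/
def consIdx (k : ℕ) : Idx k × ℕ ≃ Idx (k + 1) where
  toFun q := ⟨Fin.cons (hd k q.1.1 + q.2) q.1.1, by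
    constructor
    · intro i j hij
      induction i using Fin.cases with
      | zero =>
        induction j using Fin.cases with
        | zero => exact le_refl _
        | succ j =>
          simp only [Fin.cons_zero, Fin.cons_succ]
          exact (le_hd q.1 j).trans (Nat.le_add_right _ _)
      | succ i =>
        induction j using Fin.cases with
        | zero => exact absurd hij (by simp)
        | succ j =>
          simp only [Fin.cons_succ]
          exact q.1.2.1 i j (Fin.succ_le_succ_iff.1 hij)
    · intro i
      induction i using Fin.cases with
      | zero =>
        simp only [Fin.cons_zero]
        exact (hd_pos q.1).trans (Nat.le_add_right _ _)
      | succ i =>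
        simp only [Fin.cons_succ]
        exact q.1.2.2 i⟩
  invFun m := (⟨Fin.tail m.1, fun i j h => m.2.1 _ _ (Fin.succ_le_succ_iff.2 h),
    fun i => m.2.2 _⟩, m.1 0 - hd k (Fin.tail m.1))
  left_inv q := by
    ext <;> simp [Fin.tail]
  right_inv m := by
    apply Subtype.ext
    have h : hd k (Fin.tail m.1) + (m.1 0 - hd k (Fin.tail m.1)) = m.1 0 :=
      Nat.add_sub_cancel' (hd_le m)
    simp only [h]
    exact Fin.cons_self_tail m.1

/-- Summation over a new first index. -/
noncomputable def A (s : ℕ) (x : ℝ) (F : ℕ → ℝ) (n : ℕ) : ℝ :=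
  ∑' j : ℕ, F (n + j) * (x ^ (n + j) / ((n + j : ℕ) : ℝ) ^ s)

/-- Iterated summation. -/
noncomputable def It (l : List (ℕ × ℝ)) (F : ℕ → ℝ) : ℕ → ℝ :=
  l.foldl (fun F p => A p.1 p.2 F) F

/-- Convergence of iterated summation. -/
def Ok : List (ℕ × ℝ) → (ℕ → ℝ) → Prop
  | [], _ => True
  | p :: l, F => Summable (fun j : ℕ => |F (1 + j)| * (|p.2| ^ (1 + j) / ((1 + j : ℕ) : ℝ) ^ p.1)) ∧
      Ok l (A p.1 |p.2| (fun n => |F n|)) ∧ Ok l (A p.1 p.2 F)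

/-- the summand -/
noncomputable def wt (s : List ℕ) (x : List ℝ) (F : ℕ → ℝ) (m : Idx s.length) : ℝ :=
  F (hd s.length m.1) *
    ∏ i : Fin s.length, x.getD (i : ℕ) 0 ^ m.1 i / (m.1 i : ℝ) ^ s.get i

lemma wt_cons (s0 : ℕ) (x0 : ℝ) (s : List ℕ) (x : List ℝ) (F : ℕ → ℝ) (m : Idx s.length)
    (j : ℕ) : wt (s0 :: s) (x0 :: x) F (consIdx s.length (m, j)) =
      (F (hd s.length m.1 + j) * (x0 ^ (hd s.length m.1 + j) /
        ((hd s.length m.1 + j : ℕ) : ℝ) ^ s0)) *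
        ∏ i : Fin s.length, x.getD (i : ℕ) 0 ^ m.1 i / (m.1 i : ℝ) ^ s.get i := by
  unfold wt
  have : (∏ i : Fin (s0 :: s).length, (x0 :: x).getD (i : ℕ) 0 ^ (consIdx s.length (m, j)).1 i
      / ((consIdx s.length (m, j)).1 i : ℝ) ^ (s0 :: s).get i) =
      (x0 ^ (hd s.length m.1 + j) / ((hd s.length m.1 + j : ℕ) : ℝ) ^ s0) *
        ∏ i : Fin s.length, x.getD (i : ℕ) 0 ^ m.1 i / (m.1 i : ℝ) ^ s.get i := by
    exact Fin.prod_univ_succ (n := s.length) (fun i =>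
      (x0 :: x).getD (i : ℕ) 0 ^ (consIdx s.length (m, j)).1 i
      / ((consIdx s.length (m, j)).1 i : ℝ) ^ (s0 :: s).get i)
  rw [this, ← mul_assoc]
  rfl

lemma summable_shift {f : ℕ → ℝ} (hf : Summable fun j => f (1 + j)) {n : ℕ} (hn : 1 ≤ n) :
    Summable fun j => f (n + j) := by
  have := (summable_nat_add_iff (n - 1)).2 hf
  refine this.congr fun j => ?_
  rw [show 1 + (j + (n - 1)) = n + j by omega]

lemma main_sum (s : List ℕ) : ∀ (x : List ℝ) (F : ℕ → ℝ), s.length = x.length →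
    Ok (s.zip x) F → Summable (wt s x F) ∧ ∑' m, wt s x F m = It (s.zip x) F 1 := by
  induction s with
  | nil =>
    intro x F hx _
    have : Unique (Idx 0) := ⟨⟨⟨Fin.elim0, fun i => i.elim0, fun i => i.elim0⟩⟩, fun m => by
      apply Subtype.ext; funext i; exact i.elim0⟩
    have h2 : Unique (Idx ([] : List ℕ).length) := this
    refine ⟨(hasSum_fintype _).summable, ?_⟩
    rw [tsum_fintype, Fintype.sum_unique]
    simp [wt, It, hd]
  | cons s0 s ih =>
    intro x F hx hok
    cases x with
    | nil => simp at hx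
    | cons x0 x =>
      have hx' : s.length = x.length := by simpa using hx
      obtain ⟨h1, h2, h3⟩ := hok
      have hsF : ∀ m : Idx s.length, Summable fun j => |F (hd s.length m.1 + j) *
          (x0 ^ (hd s.length m.1 + j) / ((hd s.length m.1 + j : ℕ) : ℝ) ^ s0)| := by
        intro m
        have := summable_shift (f := fun n => |F n| * (|x0| ^ n / (n : ℝ) ^ s0)) h1 (hd_pos m)
        refine this.congr fun j => ?_
        rw [abs_mul, abs_div, abs_pow, abs_pow, Nat.abs_cast]
      have hS : Summable (fun q : Idx s.length × ℕ => |wt (s0 :: s) (x0 :: x) F (consIdx s.length q)|) := by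
        rw [summable_prod_of_nonneg (fun q => abs_nonneg _)]
        constructor
        · intro m
          have := (hsF m).mul_right |∏ i : Fin s.length, x.getD (i : ℕ) 0 ^ m.1 i / (m.1 i : ℝ) ^ s.get i|
          refine this.congr fun j => ?_
          rw [wt_cons, ← abs_mul]
        · have h4 := (ih x _ hx' h2).1.abs
          refine h4.congr fun m => ?_
          have : ∀ j, |wt (s0 :: s) (x0 :: x) F (consIdx s.length (m, j))| = 
            (|F (hd s.length m.1 + j)| * (|x0| ^ (hd s.length m.1 + j) /
              ((hd s.length m.1 + j : ℕ) : ℝ) ^ s0)) *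
              |∏ i : Fin s.length, x.getD (i : ℕ) 0 ^ m.1 i / (m.1 i : ℝ) ^ s.get i| := by
            intro j
            rw [wt_cons, abs_mul, abs_mul (F _), abs_div, abs_pow, abs_pow, Nat.abs_cast]
          simp only [this]
          rw [tsum_mul_right]
          unfold wt
          rw [abs_mul]
          congr 1
          apply abs_of_nonneg
          exact tsum_nonneg fun j => by positivity
      have hS' := hS.of_abs
      have hT : Summable (wt (s0 :: s) (x0 :: x) F) :=
        (Equiv.summable_iff (consIdx s.length)).1 hS'
      refine ⟨hT, ?_⟩
      have e1 : ∑' m, wt (s0 :: s) (x0 :: x) F m =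
          ∑' q, wt (s0 :: s) (x0 :: x) F (consIdx s.length q) :=
        ((consIdx s.length).tsum_eq (wt (s0 :: s) (x0 :: x) F)).symm
      rw [e1, hS'.tsum_prod]
      have e2 := (ih x _ hx' h3).2
      have e3 : It ((s0 :: s).zip (x0 :: x)) F = It (s.zip x) (A s0 x0 F) := rfl
      rw [e3, ← e2]
      refine tsum_congr fun m => ?_
      simp only [wt_cons]
      rw [tsum_mul_right]
      rfl

lemma LiStar_eq (l : List (ℕ × ℝ)) (h : Ok l (fun _ => 1)) :
    LiStar (l.map Prod.fst) (l.map Prod.snd) = It l (fun _ => 1) 1 := by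
  have hz : (l.map Prod.fst).zip (l.map Prod.snd) = l := by
    rw [List.zip_map']; simp
  have := (main_sum (l.map Prod.fst) (l.map Prod.snd) (fun _ => 1) (by simp) (by rwa [hz])).2
  rw [hz] at this
  rw [← this]
  unfold LiStar wt
  refine tsum_congr fun m => ?_
  rw [one_mul]

lemma tail2 (n : ℕ) (hn : 1 ≤ n) : Summable (fun j : ℕ => 1 / ((n + j : ℕ) : ℝ) ^ 2) ∧
    ∑' j : ℕ, 1 / ((n + j : ℕ) : ℝ) ^ 2 ≤ 2 / (n : ℝ) := by
  have hn' : (1 : ℝ) ≤ n := by exact_mod_cast hn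
  have key : ∀ N : ℕ, ∑ j ∈ Finset.range N, 1 / ((n + j : ℕ) : ℝ) ^ 2 ≤ 2 / (n : ℝ) - 2 / ((n : ℝ) + (N : ℝ)) := by
    intro N
    induction N with
    | zero => simp
    | succ N ih =>
      rw [Finset.sum_range_succ]
      have h : 1 / ((n + N : ℕ) : ℝ) ^ 2 ≤ 2 / ((n : ℝ) + (N : ℝ)) - 2 / ((n : ℝ) + ((N + 1 : ℕ) : ℝ)) := by
        push_cast
        have hx : (1 : ℝ) ≤ n + N := by
          have : (0 : ℝ) ≤ N := Nat.cast_nonneg N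
          linarith
        rw [← add_assoc]
        generalize (n : ℝ) + N = x at hx
        have hx0 : 0 < x := by linarith
        have h1 : 2 / x - 2 / (x + 1) = 2 / (x * (x + 1)) := by field_simp; ring
        rw [h1, div_le_div_iff₀ (by positivity) (by positivity)]
        nlinarith
      linarith
  have key' : ∀ N : ℕ, ∑ j ∈ Finset.range N, 1 / ((n + j : ℕ) : ℝ) ^ 2 ≤ 2 / (n : ℝ) := by
    intro N
    have : (0 : ℝ) ≤ 2 / ((n : ℝ) + (N : ℝ)) := by positivity
    linarith [key N]
  exact ⟨summable_of_sum_range_le (fun j => by positivity) key',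
    Real.tsum_le_of_sum_range_le (fun j => by positivity) key'⟩

lemma tailC {t : ℕ → ℝ} {C w : ℝ} (hC : 0 ≤ C) (hw0 : 0 ≤ w) (hw1 : w ≤ 1)
    (ht : ∀ m, 1 ≤ m → |t m| ≤ C * w ^ m / (m : ℝ) ^ 2) (n : ℕ) (hn : 1 ≤ n) :
    Summable (fun j => |t (n + j)|) ∧ |∑' j, t (n + j)| ≤ 2 * C * w ^ n / n := by
  obtain ⟨h1, h2⟩ := tail2 n hn
  have hb : ∀ j, |t (n + j)| ≤ C * w ^ n * (1 / ((n + j : ℕ) : ℝ) ^ 2) := by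
    intro j
    refine (ht (n + j) (by omega)).trans ?_
    rw [mul_one_div]
    gcongr C * ?_ / _
    exact pow_le_pow_of_le_one hw0 hw1 (Nat.le_add_right _ _)
  have h3 := h1.mul_left (C * w ^ n)
  have hs : Summable (fun j => |t (n + j)|) := Summable.of_nonneg_of_le (fun _ => abs_nonneg _) hb h3
  refine ⟨hs, ?_⟩
  have e1 : |∑' j, t (n + j)| ≤ ∑' j, |t (n + j)| := by
    have := norm_tsum_le_tsum_norm (f := fun j => t (n + j)) hs
    simpa only [Real.norm_eq_abs] using this
  have e2 := hs.tsum_le_tsum hb h3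
  rw [tsum_mul_left] at e2
  have e3 : C * w ^ n * (∑' j : ℕ, 1 / ((n + j : ℕ) : ℝ) ^ 2) ≤ C * w ^ n * (2 / n) :=
    mul_le_mul_of_nonneg_left h2 (by positivity)
  calc _ ≤ _ := e1.trans (e2.trans e3)
    _ = _ := by ring

lemma tailG {t : ℕ → ℝ} {C w : ℝ} (hC : 0 ≤ C) (hw0 : 0 ≤ w) (hw1 : w < 1) (n : ℕ) (hn : 1 ≤ n)
    (ht : ∀ j, |t j| ≤ C * w ^ j / ((n + j : ℕ) : ℝ)) :
    Summable (fun j => |t j|) ∧ |∑' j, t j| ≤ C / (1 - w) / n := by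
  have hn' : (1 : ℝ) ≤ n := by exact_mod_cast hn
  have hb : ∀ j, |t j| ≤ C / n * w ^ j := by
    intro j
    refine (ht j).trans ?_
    rw [div_mul_eq_mul_div]
    gcongr
    omega
  have h3 := (summable_geometric_of_lt_one hw0 hw1).mul_left (C / n)
  have hs : Summable (fun j => |t j|) := Summable.of_nonneg_of_le (fun _ => abs_nonneg _) hb h3
  refine ⟨hs, ?_⟩
  have e1 : |∑' j, t j| ≤ ∑' j, |t j| := by
    have := norm_tsum_le_tsum_norm (f := fun j => t j) hs
    simpa only [Real.norm_eq_abs] using this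
  have e2 := hs.tsum_le_tsum hb h3
  rw [tsum_mul_left, tsum_geometric_of_lt_one hw0 hw1] at e2
  calc _ ≤ _ := e1.trans e2
    _ = _ := by rw [← div_eq_mul_inv, div_right_comm]

/-- Partial products are at most one -/
def PP : ℝ → List (ℕ × ℝ) → Prop
  | _, [] => True
  | z, p :: l => 1 ≤ p.1 ∧ z * |p.2| ≤ 1 ∧ PP (z * |p.2|) l

lemma okB (l : List (ℕ × ℝ)) : ∀ (F : ℕ → ℝ) (z C : ℝ), 0 ≤ z → 0 ≤ C →
    (∀ n, 1 ≤ n → |F n| ≤ C * z ^ n / n) → PP z l → Ok l F := by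
  induction l with
  | nil => intros; trivial
  | cons p l ih =>
    intro F z C hz hC hF hP
    obtain ⟨hs, hx, hP⟩ := hP
    have hw0 : 0 ≤ z * |p.2| := by positivity
    have ht : ∀ (x : ℝ) (G : ℕ → ℝ), |x| = |p.2| → (∀ n, |G n| = |F n|) → ∀ m, 1 ≤ m →
        |G m * (x ^ m / (m : ℝ) ^ p.1)| ≤ C * (z * |p.2|) ^ m / (m : ℝ) ^ 2 := by
      intro x G hx hG m hm
      have hm' : (1 : ℝ) ≤ m := by exact_mod_cast hm
      rw [abs_mul, abs_div, abs_pow, abs_pow, Nat.abs_cast, hx, hG]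
      have h1 : |p.2| ^ m / (m : ℝ) ^ p.1 ≤ |p.2| ^ m / m := by
        gcongr
        exact le_self_pow₀ hm' (by omega)
      calc _ ≤ (C * z ^ m / m) * (|p.2| ^ m / m) := by
            apply mul_le_mul (hF m hm) h1 (by positivity) (by positivity)
        _ = _ := by rw [mul_pow]; field_simp
    have k1 := fun n hn => tailC hC hw0 hx (ht |p.2| (fun n => |F n|) (abs_abs _) (fun n => abs_abs _)) n hn
    have k2 := fun n hn => tailC hC hw0 hx (ht p.2 F rfl (fun n => rfl)) n hn
    refine ⟨?_, ih _ _ (2 * C) hw0 (by positivity) (fun n hn => (k1 n hn).2) hP,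
      ih _ _ (2 * C) hw0 (by positivity) (fun n hn => (k2 n hn).2) hP⟩
    refine (k1 1 le_rfl).1.congr fun j => ?_
    exact abs_of_nonneg (by positivity)

lemma ok_first2 (s : ℕ) (x : ℝ) (l : List (ℕ × ℝ)) (hs : 2 ≤ s) (hx : |x| ≤ 1) (hP : PP |x| l) :
    Ok ((s, x) :: l) (fun _ => 1) := by
  have ht : ∀ y : ℝ, |y| = |x| → ∀ m : ℕ, 1 ≤ m →
      |(1 : ℝ) * (y ^ m / (m : ℝ) ^ s)| ≤ 1 * |x| ^ m / (m : ℝ) ^ 2 := by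
    intro y hy m hm
    have hm' : (1 : ℝ) ≤ m := by exact_mod_cast hm
    rw [one_mul, one_mul, abs_div, abs_pow, abs_pow, Nat.abs_cast, hy]
    gcongr
  have k1 := fun n hn => tailC zero_le_one (abs_nonneg x) hx (ht |x| (abs_abs _)) n hn
  have k2 := fun n hn => tailC zero_le_one (abs_nonneg x) hx (ht x rfl) n hn
  refine ⟨?_, okB l _ |x| (2 * 1) (abs_nonneg _) (by norm_num) (fun n hn => ?_) hP,
    okB l _ |x| (2 * 1) (abs_nonneg _) (by norm_num) (fun n hn => (k2 n hn).2) hP⟩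
  · refine (k1 1 le_rfl).1.congr fun j => ?_
    rw [abs_one]
    exact abs_of_nonneg (by positivity)
  · simp only [abs_one]
    exact (k1 n hn).2

lemma ok_first1 (x : ℝ) (l : List (ℕ × ℝ)) (hx : |x| < 1) (hP : PP |x| l) :
    Ok ((1, x) :: l) (fun _ => 1) := by
  have hx0 : 0 < 1 - |x| := by linarith
  have ht : ∀ y : ℝ, |y| = |x| → ∀ n j, 
      |(1 : ℝ) * (y ^ (n + j) / ((n + j : ℕ) : ℝ) ^ 1)| ≤ |x| ^ n * |x| ^ j / ((n + j : ℕ) : ℝ) := by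
    intro y hy n j
    rw [one_mul, pow_one, abs_div, abs_pow, Nat.abs_cast, hy, pow_add]
  have k1 := fun n hn => tailG (by positivity) (abs_nonneg x) hx n hn (ht |x| (abs_abs _) n)
  have k2 := fun n hn => tailG (by positivity) (abs_nonneg x) hx n hn (ht x rfl n)
  refine ⟨?_, okB l _ |x| (1 / (1 - |x|)) (abs_nonneg _) (by positivity) (fun n hn => ?_) hP,
    okB l _ |x| (1 / (1 - |x|)) (abs_nonneg _) (by positivity) (fun n hn => ?_) hP⟩
  · refine (k1 1 le_rfl).1.congr fun j => ?_
    rw [abs_one]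
    exact abs_of_nonneg (by positivity)
  · simp only [abs_one]
    refine (k1 n hn).2.trans (le_of_eq ?_)
    ring
  · refine (k2 n hn).2.trans (le_of_eq ?_)
    ring

/-- Generating function. -/
noncomputable def Phi (f : ℕ → ℝ) (z : ℝ) : ℝ :=
  ∑' n : ℕ, f (n + 1) / ((n + 1 : ℕ) : ℝ) * z ^ (n + 1)

/-- Its derivative. -/
noncomputable def SS (f : ℕ → ℝ) (z : ℝ) : ℝ := ∑' n : ℕ, f (n + 1) * z ^ n

/-- Normalized summation operator. -/
noncomputable def R (y : ℝ) (f : ℕ → ℝ) (n : ℕ) : ℝ :=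
  ∑' j : ℕ, y ^ j * (f (n + j) / ((n + j : ℕ) : ℝ))

/-- Division by the index. -/
noncomputable def DD (f : ℕ → ℝ) (n : ℕ) : ℝ := f n / n

def B0 (f : ℕ → ℝ) : Prop := ∃ C, 0 ≤ C ∧ ∀ n, 1 ≤ n → |f n| ≤ C
def B1 (f : ℕ → ℝ) : Prop := ∃ C, 0 ≤ C ∧ ∀ n, 1 ≤ n → |f n| ≤ C / (n : ℝ)

lemma B1.b0 {f : ℕ → ℝ} (h : B1 f) : B0 f := by
  obtain ⟨C, hC, h⟩ := h
  refine ⟨C, hC, fun n hn => (h n hn).trans ?_⟩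
  exact div_le_self hC (by exact_mod_cast hn)

lemma B0.dd {f : ℕ → ℝ} (h : B0 f) : B1 (DD f) := by
  obtain ⟨C, hC, h⟩ := h
  refine ⟨C, hC, fun n hn => ?_⟩
  unfold DD
  rw [abs_div, Nat.abs_cast]
  gcongr
  exact h n hn

lemma B0.rq {f : ℕ → ℝ} (h : B0 f) {y : ℝ} (hy : |y| < 1) : 
    (∀ n, 1 ≤ n → Summable fun j : ℕ => y ^ j * (f (n + j) / ((n + j : ℕ) : ℝ))) ∧ B1 (R y f) := by
  obtain ⟨C, hC, h⟩ := h
  have k := fun (n : ℕ) (hn : 1 ≤ n) =>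
    tailG (t := fun j : ℕ => y ^ j * (f (n + j) / ((n + j : ℕ) : ℝ))) hC (abs_nonneg y) hy n hn
    (fun j => by
      rw [abs_mul, abs_div, abs_pow, Nat.abs_cast, ← mul_div_assoc, mul_comm]
      gcongr
      exact h _ (by omega))
  have : 0 < 1 - |y| := by linarith
  exact ⟨fun n hn => (k n hn).1.of_abs, C / (1 - |y|), by positivity, fun n hn => (k n hn).2⟩

lemma B1.r1 {f : ℕ → ℝ} (h : B1 f) : 
    (∀ n, 1 ≤ n → Summable fun j : ℕ => (1 : ℝ) ^ j * (f (n + j) / ((n + j : ℕ) : ℝ))) ∧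
      B1 (R 1 f) := by
  obtain ⟨C, hC, h⟩ := h
  have k := fun (n : ℕ) (hn : 1 ≤ n) =>
    tailC (t := fun j : ℕ => f j / (j : ℝ)) hC zero_le_one le_rfl (fun m hm => by
      rw [abs_div, Nat.abs_cast, one_pow, mul_one, pow_two, ← div_div]
      gcongr
      exact h m hm) n hn
  simp only [one_pow, mul_one] at k
  unfold R
  simp only [one_pow, one_mul]
  exact ⟨fun n hn => (k n hn).1.of_abs, 2 * C, by positivity, fun n hn => (k n hn).2⟩

lemma SS_summable {f : ℕ → ℝ} (h : B0 f) {z : ℝ} (hz : |z| < 1) :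
    Summable fun n : ℕ => f (n + 1) * z ^ n := by
  obtain ⟨C, hC, h⟩ := h
  refine Summable.of_norm_bounded ((summable_geometric_of_lt_one (abs_nonneg z) hz).mul_left C)
    fun n => ?_
  rw [Real.norm_eq_abs, abs_mul, abs_pow]
  gcongr
  exact h _ (by omega)

lemma Phi_summable {f : ℕ → ℝ} (h : B0 f) {z : ℝ} (hz : |z| < 1) :
    Summable fun n : ℕ => f (n + 1) / ((n + 1 : ℕ) : ℝ) * z ^ (n + 1) := by
  have := (SS_summable h.dd.b0 hz).mul_right z
  refine this.congr fun n => ?_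
  unfold DD
  rw [pow_succ, mul_assoc]

lemma Phi_hasDerivAt {f : ℕ → ℝ} (h : B0 f) {z : ℝ} (hz : |z| < 1) :
    HasDerivAt (Phi f) (SS f z) z := by
  obtain ⟨r, hr1, hr2⟩ := exists_between hz
  have hr0 : 0 ≤ r := (abs_nonneg z).trans hr1.le
  obtain ⟨C, hC, hf⟩ := id h
  have hu : Summable fun n : ℕ => C * r ^ n :=
    (summable_geometric_of_lt_one hr0 hr2).mul_left C
  unfold Phi SS
  refine hasDerivAt_tsum_of_isPreconnected (t := Metric.ball (0 : ℝ) r) (y₀ := z)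
    (u := fun n => C * r ^ n)
    (g := fun n z => f (n + 1) / ((n + 1 : ℕ) : ℝ) * z ^ (n + 1))
    (g' := fun n z => f (n + 1) * z ^ n) hu Metric.isOpen_ball
    (convex_ball _ _).isPreconnected (fun n y _ => ?_) (fun n y hy => ?_) ?_ (Phi_summable h hz) ?_
  · have h1 := (hasDerivAt_pow (n + 1) y).const_mul (f (n + 1) / ((n + 1 : ℕ) : ℝ))
    refine h1.congr_deriv ?_
    have : ((n + 1 : ℕ) : ℝ) ≠ 0 := by positivity
    rw [Nat.add_sub_cancel]
    field_simp
  · rw [Real.norm_eq_abs, abs_mul, abs_pow]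
    have : |y| < r := by simpa using hy
    gcongr
    exact hf _ (by omega)
  · simpa using hr1
  · simpa using hr1

lemma Phi_continuousOn {f : ℕ → ℝ} (h : B1 f) : ContinuousOn (Phi f) (Set.Icc (-1) 1) := by
  obtain ⟨C, hC, hf⟩ := h
  refine continuousOn_tsum (u := fun n => C * (1 / ((1 + n : ℕ) : ℝ) ^ 2))
    (fun n => by fun_prop) ((tail2 1 le_rfl).1.mul_left C) (fun n x hx => ?_)
  rw [Real.norm_eq_abs, abs_mul, abs_pow, abs_div, Nat.abs_cast]
  have h1 : |x| ^ (n + 1) ≤ 1 := pow_le_one₀ (abs_nonneg _) (abs_le.2 hx)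
  have h2 := hf (n + 1) (by omega)
  calc _ ≤ C / ((n + 1 : ℕ) : ℝ) / ((n + 1 : ℕ) : ℝ) * 1 := by gcongr
    _ = _ := by rw [add_comm n 1]; field_simp

lemma telescope {f : ℕ → ℝ} (hf : B0 f) {y z : ℝ} (hz : |z| < 1)
    (hs : ∀ n, 1 ≤ n → Summable fun j : ℕ => y ^ j * (f (n + j) / ((n + j : ℕ) : ℝ)))
    (hR : B0 (R y f)) : (z - y) * SS (R y f) z = Phi f z - Phi f y := by
  have hrec : ∀ n, 1 ≤ n → R y f n = f n / (n : ℝ) + y * R y f (n + 1) := by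
    intro n hn
    unfold R
    rw [(hs n hn).tsum_eq_zero_add, ← tsum_mul_left]
    simp only [pow_zero, add_zero, one_mul]
    congr 1
    refine tsum_congr fun j => ?_
    rw [pow_succ', show n + (j + 1) = n + 1 + j by ring]
    ring
  have hy : Phi f y = y * R y f 1 := by
    unfold Phi R
    rw [← tsum_mul_left]
    refine tsum_congr fun j => ?_
    rw [add_comm j 1, pow_add]
    ring
  have s1 := SS_summable hR hz
  have s2 := Phi_summable hf hz
  have s3 : Summable fun n : ℕ => R y f (n + 1 + 1) * z ^ (n + 1) :=
    (summable_nat_add_iff (f := fun n => R y f (n + 1) * z ^ n) 1).2 s1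
  have e1 : SS (R y f) z = R y f 1 + ∑' n : ℕ, R y f (n + 1 + 1) * z ^ (n + 1) := by
    unfold SS
    rw [s1.tsum_eq_zero_add]
    simp
  have e2 : z * SS (R y f) z = Phi f z + y * ∑' n : ℕ, R y f (n + 1 + 1) * z ^ (n + 1) := by
    unfold SS Phi
    rw [← tsum_mul_left, ← tsum_mul_left, ← s2.tsum_add (s3.mul_left y)]
    refine tsum_congr fun n => ?_
    rw [hrec (n + 1) (by omega)]
    ring
  rw [hy, sub_mul, e2, e1]
  ring

lemma mul_SS_DD (g : ℕ → ℝ) (z : ℝ) : z * SS (DD g) z = Phi g z := by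
  unfold SS Phi DD
  rw [← tsum_mul_left]
  refine tsum_congr fun n => ?_
  ring

lemma Phi_zero (g : ℕ → ℝ) : Phi g 0 = 0 := by simp [Phi]

/-- Parameters. -/
structure Par (p α : ℝ) : Prop where
  p0 : 0 < p
  p2 : p < 2
  a0 : 0 < α
  a1 : α ≤ 1
  a2 : p * α ≤ 2 - p

/-- The invariant. -/
def Inv (p α : ℝ) (f g : ℕ → ℝ) : Prop :=
  ∀ a ∈ Set.Ioo (-α) 1, Phi g a = Phi f (1 - p + p * a) - Phi f (1 - p)

lemma Par.q {p α : ℝ} (h : Par p α) : |1 - p| < 1 := by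
  rw [abs_lt]; constructor <;> linarith [h.p0, h.p2]

lemma Par.lt1 {p α : ℝ} (h : Par p α) {a : ℝ} (ha : a ∈ Set.Ioo (-α) 1) : |a| < 1 := by
  rw [abs_lt]; exact ⟨by linarith [h.a1, ha.1], ha.2⟩

lemma Par.lt2 {p α : ℝ} (h : Par p α) {a : ℝ} (ha : a ∈ Set.Ioo (-α) 1) :
    |1 - p + p * a| < 1 := by
  have h1 := mul_lt_mul_of_pos_left ha.1 h.p0
  have h2 := mul_lt_mul_of_pos_left ha.2 h.p0
  rw [abs_lt]; constructor <;> nlinarith [h.a2, h.p0, h.p2]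

lemma Par.le2 {p α : ℝ} (h : Par p α) {a : ℝ} (ha : a ∈ Set.Icc (-α) 1) :
    1 - p + p * a ∈ Set.Icc (-1 : ℝ) 1 := by
  have h1 := mul_le_mul_of_nonneg_left ha.1 h.p0.le
  have h2 := mul_le_mul_of_nonneg_left ha.2 h.p0.le
  constructor <;> nlinarith [h.a2, h.p0, h.p2]

lemma Inv.closed {p α : ℝ} (h : Par p α) {f g : ℕ → ℝ} (hf : B1 f) (hg : B1 g)
    (hI : Inv p α f g) : ∀ a ∈ Set.Icc (-α) 1, Phi g a = Phi f (1 - p + p * a) - Phi f (1 - p) := by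
  refine Set.EqOn.of_subset_closure (s := Set.Ioo (-α) 1) hI ?_ ?_ Set.Ioo_subset_Icc_self ?_
  · exact (Phi_continuousOn hg).mono (Set.Icc_subset_Icc (by linarith [h.a1]) le_rfl)
  · refine ContinuousOn.sub ?_ continuousOn_const
    exact (Phi_continuousOn hf).comp (by fun_prop) (fun a ha => h.le2 ha)
  · rw [closure_Ioo (by linarith [h.a0])]

lemma Inv.ode {p α : ℝ} (h : Par p α) {f g : ℕ → ℝ} (hf : B0 f) (hg : B0 g)
    (hd : ∀ a ∈ Set.Ioo (-α) 1, a ≠ 0 → SS g a = p * SS f (1 - p + p * a)) : Inv p α f g := by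
  intro a ha
  set G : ℝ → ℝ := fun a => Phi g a - Phi f (1 - p + p * a) with hG
  have hder : ∀ a ∈ Set.Ioo (-α) 1, HasDerivAt G (SS g a - SS f (1 - p + p * a) * p) a := by
    intro a ha
    have h1 := Phi_hasDerivAt hg (h.lt1 ha)
    have h2 : HasDerivAt (fun a : ℝ => 1 - p + p * a) p a := by
      simpa using ((hasDerivAt_id a).const_mul p).const_add (1 - p)
    have h3 := (Phi_hasDerivAt hf (h.lt2 ha))
    exact h1.sub (HasDerivAt.comp (h₂ := Phi f) a h3 h2)
  have h0 : (0 : ℝ) ∈ Set.Ioo (-α) 1 := ⟨by linarith [h.a0], one_pos⟩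
  have key : ∀ b c : ℝ, b ∈ Set.Ioo (-α) 1 → c ∈ Set.Ioo (-α) 1 → b < c →
      (∀ x ∈ Set.Ioo b c, x ≠ 0) → G b = G c := by
    intro b c hb hc hbc hx
    have hsub : Set.Icc b c ⊆ Set.Ioo (-α) 1 := fun x hx =>
      ⟨lt_of_lt_of_le hb.1 hx.1, lt_of_le_of_lt hx.2 hc.2⟩
    obtain ⟨x, hxm, hxe⟩ := exists_hasDerivAt_eq_slope G
      (fun a => SS g a - SS f (1 - p + p * a) * p) hbc
      (fun x hx => (hder x (hsub hx)).continuousAt.continuousWithinAt)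
      (fun x hx => hder x (hsub (Set.Ioo_subset_Icc_self hx)))
    have hz := hd x (hsub (Set.Ioo_subset_Icc_self hxm)) (hx x hxm)
    have : (G c - G b) / (c - b) = 0 := by rw [← hxe, hz]; ring
    rcases div_eq_zero_iff.1 this with h | h <;> linarith
  have hGa : G a = G 0 := by
    rcases lt_trichotomy a 0 with h1 | h1 | h1
    · exact key a 0 ha h0 h1 fun x hx => hx.2.ne
    · rw [h1]
    · exact (key 0 a h0 ha h1 fun x hx => hx.1.ne').symm
  simp only [hG, Phi_zero, mul_zero, add_zero] at hGa
  linarith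

lemma Inv.stepq {p α : ℝ} (h : Par p α) {f g : ℕ → ℝ} (hf : B0 f) (hg : B0 g)
    (hI : Inv p α f g) : Inv p α (R (1 - p) f) (DD g) := by
  obtain ⟨k1, k2⟩ := hf.rq h.q
  refine Inv.ode h k2.b0 hg.dd.b0 fun a ha ha0 => ?_
  have e1 := telescope hf (h.lt2 ha) k1 k2.b0
  have e2 := mul_SS_DD g a
  rw [hI a ha, ← e1] at e2
  apply mul_left_cancel₀ ha0
  rw [e2]
  ring

lemma Inv.step1 {p α : ℝ} (h : Par p α) {f g : ℕ → ℝ} (hf : B1 f) (hg : B1 g)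
    (hI : Inv p α f g) : Inv p α (R 1 f) (R 1 g) := by
  obtain ⟨k1, k2⟩ := hf.r1
  obtain ⟨l1, l2⟩ := hg.r1
  refine Inv.ode h k2.b0 l2.b0 fun a ha ha0 => ?_
  have e1 := telescope hf.b0 (h.lt2 ha) k1 k2.b0
  have e2 := telescope hg.b0 (h.lt1 ha) l1 l2.b0
  have e3 := hI.closed h hf hg 1 ⟨by linarith [h.a0], le_rfl⟩
  rw [hI a ha, e3, mul_one, sub_add_cancel] at e2
  have : a - 1 ≠ 0 := sub_ne_zero.2 ha.2.ne
  apply mul_left_cancel₀ this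
  rw [e2, sub_sub_sub_cancel_right, ← e1]
  ring

lemma Inv.start {p α : ℝ} (h : Par p α) : Inv p α (fun _ => 1) (fun _ => 1) := by
  have hl : ∀ z : ℝ, |z| < 1 → Phi (fun _ => 1) z = - Real.log (1 - z) := by
    intro z hz
    rw [← (Real.hasSum_pow_div_log_of_abs_lt_one hz).tsum_eq]
    refine tsum_congr fun n => ?_
    push_cast
    ring
  intro a ha
  rw [hl a (h.lt1 ha), hl _ (h.lt2 ha), hl _ h.q]
  have h1 : 1 - (1 - p + p * a) = p * (1 - a) := by ring
  rw [h1, Real.log_mul h.p0.ne' (by linarith [ha.2]), sub_sub_cancel]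
  ring

lemma B0.one : B0 (fun _ => 1) := ⟨1, zero_le_one, fun _ _ => by simp⟩

lemma DD_iter (k : ℕ) (g : ℕ → ℝ) (n : ℕ) : (DD^[k] g) n = g n / (n : ℝ) ^ k := by
  induction k with
  | zero => simp
  | succ k ih =>
    rw [Function.iterate_succ_apply']
    unfold DD
    unfold DD at ih
    rw [ih, pow_succ, div_div]

lemma A_y (x y : ℝ) (f : ℕ → ℝ) :
    A 1 x (fun n => y ^ n * f n) = fun n => (y * x) ^ n * R (y * x) f n := by
  funext n
  unfold A R
  rw [← tsum_mul_left]
  refine tsum_congr fun j => ?_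
  simp only [pow_one, mul_pow, pow_add]
  ring

lemma A_11 (f : ℕ → ℝ) : A 1 1 f = R 1 f := by
  have := A_y 1 1 f
  simpa using this

lemma A_m1 (m : ℕ) (g : ℕ → ℝ) : A (m + 2) 1 g = R 1 (DD^[m + 1] g) := by
  funext n
  unfold A R
  refine tsum_congr fun j => ?_
  rw [DD_iter, one_pow, one_pow, one_mul, div_div, ← pow_succ, mul_one_div]

lemma A_last (m : ℕ) (a : ℝ) (g : ℕ → ℝ) : A (m + 2) a g 1 = Phi (DD^[m + 1] g) a := by
  unfold A Phi
  refine tsum_congr fun j => ?_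
  rw [DD_iter, div_div, ← pow_succ, add_comm 1 j]
  ring

lemma A_last1 (x y : ℝ) (f : ℕ → ℝ) : A 1 x (fun n => y ^ n * f n) 1 = Phi f (y * x) := by
  unfold A Phi
  refine tsum_congr fun j => ?_
  rw [pow_one, add_comm 1 j, mul_pow]
  ring

lemma It_app (l1 l2 : List (ℕ × ℝ)) (F : ℕ → ℝ) : It (l1 ++ l2) F = It l2 (It l1 F) :=
  List.foldl_append

lemma It_cons (p : ℕ × ℝ) (l : List (ℕ × ℝ)) (F : ℕ → ℝ) : It (p :: l) F = It l (A p.1 p.2 F) :=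
  rfl

lemma It_rep (k : ℕ) (y : ℝ) : ∀ f : ℕ → ℝ, It (List.replicate k (1, 1)) (fun n => y ^ n * f n) =
    fun n => y ^ n * ((R y)^[k] f) n := by
  induction k with
  | zero => intro f; rfl
  | succ k ih =>
    intro f
    rw [List.replicate_succ, It_cons, A_y, mul_one, ih]
    rfl

lemma It_rep1 (k : ℕ) (f : ℕ → ℝ) : It (List.replicate k (1, 1)) f = (R 1)^[k] f := by
  have := It_rep k 1 f
  simpa using this

lemma It_blockL (m u : ℕ) (g : ℕ → ℝ) : It ((m + 2, 1) :: List.replicate u (1, 1)) g =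
    (R 1)^[u + 1] (DD^[m + 1] g) := by
  rw [It_cons, It_rep1, A_m1]
  rfl

lemma It_q (m : ℕ) (q : ℝ) (f : ℕ → ℝ) : It ((1, q) :: List.replicate m (1, 1)) f =
    fun n => q ^ n * ((R q)^[m + 1] f) n := by
  have := A_y q 1 f
  simp only [one_pow, one_mul] at this
  rw [It_cons, this, It_rep]
  rfl

lemma It_blockR (m u : ℕ) {q : ℝ} (hq : q ≠ 0) (f : ℕ → ℝ) :
    It ((1, q) :: (List.replicate m (1, 1) ++ (1, 1 / q) :: List.replicate u (1, 1))) f =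
    (R 1)^[u + 1] ((R q)^[m + 1] f) := by
  rw [← List.cons_append, It_app, It_q m q f, It_cons, A_y, It_rep1, mul_one_div_cancel hq]
  simp only [one_pow, one_mul]
  rfl

def Good1 (p α : ℝ) (f g : ℕ → ℝ) : Prop := B1 f ∧ B1 g ∧ Inv p α f g
def Good0 (p α : ℝ) (f g : ℕ → ℝ) : Prop := B0 f ∧ B0 g ∧ Inv p α f g

lemma Good1.to0 {p α : ℝ} {f g : ℕ → ℝ} (h : Good1 p α f g) : Good0 p α f g :=
  ⟨h.1.b0, h.2.1.b0, h.2.2⟩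

lemma good_q {p α : ℝ} (h : Par p α) (m : ℕ) {f g : ℕ → ℝ} (hg : Good0 p α f g) :
    Good1 p α ((R (1 - p))^[m + 1] f) (DD^[m + 1] g) := by
  induction m with
  | zero => exact ⟨(hg.1.rq h.q).2, hg.2.1.dd, Inv.stepq h hg.1 hg.2.1 hg.2.2⟩
  | succ m ih =>
    rw [Function.iterate_succ_apply', Function.iterate_succ_apply' DD]
    have hg := ih.to0
    exact ⟨(hg.1.rq h.q).2, hg.2.1.dd, Inv.stepq h hg.1 hg.2.1 hg.2.2⟩

lemma good_1 {p α : ℝ} (h : Par p α) (m : ℕ) {f g : ℕ → ℝ} (hg : Good1 p α f g) :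
    Good1 p α ((R 1)^[m] f) ((R 1)^[m] g) := by
  induction m with
  | zero => exact hg
  | succ m ih =>
    rw [Function.iterate_succ_apply', Function.iterate_succ_apply']
    exact ⟨ih.1.r1.2, ih.2.1.r1.2, Inv.step1 h ih.1 ih.2.1 ih.2.2⟩

/-- blocks, left-hand side -/
def LL (bl : List (ℕ × ℕ)) : List (ℕ × ℝ) :=
  (bl.map fun b => (b.1 + 2, (1 : ℝ)) :: List.replicate b.2 (1, 1)).flatten

/-- blocks, right-hand side -/
noncomputable def XX (p : ℝ) (bl : List (ℕ × ℕ)) : List ℝ :=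
  (bl.map fun b => (1 - p) :: (List.replicate b.1 (1 : ℝ) ++
      (1 / (1 - p)) :: List.replicate b.2 (1 : ℝ))).flatten

/-- pairing with exponent one -/
def mk1 (x : ℝ) : ℕ × ℝ := (1, x)

lemma good_bl {p α : ℝ} (h : Par p α) (hp : p ≠ 1) (bl : List (ℕ × ℕ)) : ∀ {f g : ℕ → ℝ},
    Good0 p α f g → Good0 p α (It ((XX p bl).map mk1) f) (It (LL bl) g) := by
  have hq : 1 - p ≠ 0 := sub_ne_zero.2 hp.symm
  induction bl with
  | nil => intro f g hg; exact hg
  | cons b bl ih =>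
    intro f g hg
    have e1 : (XX p (b :: bl)).map mk1 = ((1, 1 - p) :: (List.replicate b.1 (1, 1) ++
      (1, 1 / (1 - p)) :: List.replicate b.2 (1, 1))) ++ (XX p bl).map mk1 := by
      simp [XX, mk1]
    have e2 : LL (b :: bl) = ((b.1 + 2, 1) :: List.replicate b.2 (1, 1)) ++ LL bl := by
      simp [LL]
    rw [e1, e2, It_app, It_app, It_blockL, It_blockR _ _ hq]
    exact ih (good_1 h _ (good_q h _ hg)).to0

lemma PP_rep (k : ℕ) (z : ℝ) (hz : z ≤ 1) (l : List (ℕ × ℝ)) (hl : PP z l) :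
    PP z (List.replicate k (1, 1) ++ l) := by
  induction k with
  | zero => simpa using hl
  | succ k ih =>
    rw [List.replicate_succ, List.cons_append]
    exact ⟨le_rfl, by simpa using hz, by simpa using ih⟩

lemma PP_L (bl : List (ℕ × ℕ)) (M : ℕ) (a : ℝ) (ha : |a| ≤ 1) :
    PP 1 (LL bl ++ [(M + 2, a)]) := by
  induction bl with
  | nil => exact ⟨by simp, by simpa using ha, trivial⟩
  | cons b bl ih =>
    have e2 : LL (b :: bl) ++ [(M + 2, a)] =
      (b.1 + 2, 1) :: (List.replicate b.2 (1, 1) ++ (LL bl ++ [(M + 2, a)])) := by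
      simp [LL]
    rw [e2]
    refine ⟨by simp, by simp, ?_⟩
    simp only [abs_one, mul_one]
    exact PP_rep _ _ le_rfl _ ih

lemma ok_L (bl : List (ℕ × ℕ)) (M : ℕ) (a : ℝ) (ha : |a| ≤ 1) :
    Ok (LL bl ++ [(M + 2, a)]) (fun _ => 1) := by
  have h := PP_L bl M a ha
  cases bl with
  | nil => exact ok_first2 _ _ _ (by simp) ha trivial
  | cons b bl =>
    have h' := h.2.2
    rw [one_mul] at h'
    exact ok_first2 (b.1 + 2) 1 _ (by simp) (by simp) h'

lemma PP_R (bl : List (ℕ × ℕ)) (M : ℕ) (p x : ℝ) (hp : p ≠ 1) (hq : |1 - p| ≤ 1)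
    (hx : |(1 - p) * x| ≤ 1) :
    PP 1 ((XX p bl ++ (1 - p) :: (List.replicate M 1 ++ [x])).map mk1) := by
  have hq0 : 1 - p ≠ 0 := sub_ne_zero.2 hp.symm
  induction bl with
  | nil =>
    have e : (XX p [] ++ (1 - p) :: (List.replicate M 1 ++ [x])).map mk1 =
        (1, 1 - p) :: (List.replicate M (1, 1) ++ [(1, x)]) := by simp [XX, mk1]
    rw [e]
    refine ⟨le_rfl, by simpa using hq, PP_rep _ _ (by simpa using hq) _ ?_⟩
    exact ⟨le_rfl, by rwa [one_mul, ← abs_mul], trivial⟩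
  | cons b bl ih =>
    have e : (XX p (b :: bl) ++ (1 - p) :: (List.replicate M 1 ++ [x])).map mk1 =
        (1, 1 - p) :: (List.replicate b.1 (1, 1) ++ ((1, 1 / (1 - p)) ::
          (List.replicate b.2 (1, 1) ++
            (XX p bl ++ (1 - p) :: (List.replicate M 1 ++ [x])).map mk1))) := by
      simp [XX, mk1]
    rw [e]
    have h1 : 1 * |1 - p| * |1 / (1 - p)| = 1 := by
      rw [one_mul, ← abs_mul, mul_one_div_cancel hq0, abs_one]
    refine ⟨le_rfl, by simpa using hq, PP_rep _ _ (by simpa using hq) _ ?_⟩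
    refine ⟨le_rfl, h1.le, ?_⟩
    simp only [h1]
    exact PP_rep _ _ le_rfl _ ih

lemma ok_R (bl : List (ℕ × ℕ)) (M : ℕ) (p x : ℝ) (hp : p ≠ 1) (hq : |1 - p| < 1)
    (hx : |(1 - p) * x| ≤ 1) :
    Ok ((XX p bl ++ (1 - p) :: (List.replicate M 1 ++ [x])).map mk1) (fun _ => 1) := by
  have h := PP_R bl M p x hp hq.le hx
  cases bl with
  | nil =>
    have h' := h.2.2
    rw [one_mul] at h'
    exact ok_first1 (1 - p) _ hq h'
  | cons b bl =>
    have h' := h.2.2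
    rw [one_mul] at h'
    exact ok_first1 (1 - p) _ hq h'

lemma It_L (bl : List (ℕ × ℕ)) (M : ℕ) (a : ℝ) (f : ℕ → ℝ) :
    It (LL bl ++ [(M + 2, a)]) f 1 = Phi (DD^[M + 1] (It (LL bl) f)) a := by
  rw [It_app, ← A_last]
  rfl

lemma It_R (bl : List (ℕ × ℕ)) (M : ℕ) (p x : ℝ) (f : ℕ → ℝ) :
    It ((XX p bl ++ (1 - p) :: (List.replicate M 1 ++ [x])).map mk1) f 1 =
      Phi ((R (1 - p))^[M + 1] (It ((XX p bl).map mk1) f)) ((1 - p) * x) := by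
  have e : (XX p bl ++ (1 - p) :: (List.replicate M 1 ++ [x])).map mk1 =
    (XX p bl).map mk1 ++ (((1, 1 - p) :: List.replicate M (1, 1)) ++ [(1, x)]) := by
    simp [mk1]
  rw [e, It_app, It_app, It_q, ← A_last1]
  rfl

lemma len_R (bl : List (ℕ × ℕ)) (M : ℕ) (p x : ℝ) (a : ℝ) :
    List.replicate ((LL bl ++ [(M + 2, a)]).map Prod.fst).sum 1 =
    ((XX p bl ++ (1 - p) :: (List.replicate M 1 ++ [x])).map mk1).map Prod.fst := by
  symm
  rw [List.eq_replicate_iff]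
  constructor
  · induction bl with
    | nil => simp [XX, LL]
    | cons b bl ih =>
      have e1 : LL (b :: bl) = ((b.1 + 2, 1) :: List.replicate b.2 (1, 1)) ++ LL bl := by
        simp [LL]
      have e2 : XX p (b :: bl) = (1 - p) :: (List.replicate b.1 (1 : ℝ) ++
        (1 / (1 - p)) :: List.replicate b.2 (1 : ℝ)) ++ XX p bl := by simp [XX]
      rw [e1, e2]
      simp at ih ⊢
      omega
  · intro b hb
    simp [mk1] at hb
    tauto

lemma snd_L (bl : List (ℕ × ℕ)) (M : ℕ) (a : ℝ) :
    List.replicate (((LL bl ++ [(M + 2, a)]).map Prod.fst).length - 1) (1 : ℝ) ++ [a] =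
    (LL bl ++ [(M + 2, a)]).map Prod.snd := by
  have : (LL bl).map Prod.snd = List.replicate (LL bl).length 1 := by
    rw [List.eq_replicate_iff]
    refine ⟨by simp, ?_⟩
    induction bl with
    | nil => simp [LL]
    | cons b bl ih =>
      have e1 : LL (b :: bl) = ((b.1 + 2, 1) :: List.replicate b.2 (1, 1)) ++ LL bl := by
        simp [LL]
      rw [e1]
      intro c hc
      rw [List.map_append, List.mem_append] at hc
      rcases hc with hc | hc
      · simp at hc
        tauto
      · exact ih c hc
  simp [this]

lemma snd_R (l : List ℝ) : l = (l.map mk1).map Prod.snd := by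
  simp [mk1, Function.comp_def]

lemma LiStar_R (bl : List (ℕ × ℕ)) (M : ℕ) (p x a : ℝ) (hp : p ≠ 1) (hq : |1 - p| < 1)
    (hx : |(1 - p) * x| ≤ 1) :
    LiStar (List.replicate ((LL bl ++ [(M + 2, a)]).map Prod.fst).sum 1)
      (XX p bl ++ (1 - p) :: (List.replicate M 1 ++ [x])) =
      Phi ((R (1 - p))^[M + 1] (It ((XX p bl).map mk1) (fun _ => 1))) ((1 - p) * x) := by
  rw [len_R bl M p x a, ← It_R, ← LiStar_eq _ (ok_R bl M p x hp hq hx), ← snd_R]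

lemma LiStar_L (bl : List (ℕ × ℕ)) (M : ℕ) (a : ℝ) (ha : |a| ≤ 1) :
    LiStar ((LL bl ++ [(M + 2, a)]).map Prod.fst)
      (List.replicate (((LL bl ++ [(M + 2, a)]).map Prod.fst).length - 1) (1 : ℝ) ++ [a]) =
      Phi (DD^[M + 1] (It (LL bl) (fun _ => 1))) a := by
  rw [snd_L, LiStar_eq _ (ok_L bl M a ha), It_L]

theorem main_bl (bl : List (ℕ × ℕ)) (M : ℕ) (a p : ℝ)
    (hp : p ≠ 1) (ha : |a| ≤ min 1 (2 / p - 1)) :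
    LiStar ((LL bl ++ [(M + 2, a)]).map Prod.fst)
      (List.replicate (((LL bl ++ [(M + 2, a)]).map Prod.fst).length - 1) (1 : ℝ) ++ [a]) =
    LiStar (List.replicate ((LL bl ++ [(M + 2, a)]).map Prod.fst).sum 1)
      (XX p bl ++ (1 - p) :: (List.replicate M 1 ++ [1 + a * p / (1 - p)])) -
    LiStar (List.replicate ((LL bl ++ [(M + 2, a)]).map Prod.fst).sum 1)
      (XX p bl ++ (1 - p) :: (List.replicate (M + 1) 1)) := by
  have hq0 : 1 - p ≠ 0 := sub_ne_zero.2 hp.symm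
  have ha1 : |a| ≤ 1 := ha.trans (min_le_left _ _)
  have ha2 : |a| ≤ 2 / p - 1 := ha.trans (min_le_right _ _)
  rw [List.replicate_succ', LiStar_L _ _ _ ha1]
  by_cases ha0 : a = 0
  · subst ha0
    rw [Phi_zero, zero_mul, zero_div, add_zero, sub_self]
  have hapos : 0 < |a| := abs_pos.2 ha0
  have hp0 : 0 < p := by
    by_contra hcon
    have : 2 / p ≤ 0 := div_nonpos_of_nonneg_of_nonpos (by norm_num) (by linarith)
    linarith
  have hpa : p * |a| ≤ 2 - p := by
    have := mul_le_mul_of_nonneg_left ha2 hp0.le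
    rwa [mul_sub, mul_div_cancel₀ _ hp0.ne', mul_one] at this
  have h : Par p |a| := ⟨hp0, by nlinarith, hapos, ha1, hpa⟩
  have hx : (1 - p) * (1 + a * p / (1 - p)) = 1 - p + p * a := by
    field_simp
  have hmem : a ∈ Set.Icc (-|a|) 1 := ⟨neg_abs_le a, (le_abs_self a).trans ha1⟩
  rw [LiStar_R bl M p _ a hp h.q (by rw [hx]; exact abs_le.2 (h.le2 hmem)),
    LiStar_R bl M p _ a hp h.q (by rw [mul_one]; exact h.q.le), hx, mul_one]
  have hG := good_q h M (good_bl h hp bl ⟨B0.one, B0.one, Inv.start h⟩)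
  exact hG.2.2.closed h hG.1 hG.2.1 a hmem

end PolyLogAux

/-- First theorem on polylogarithms (Theorem 3.1). -/
theorem stmt_12 (d : ℕ) (m : Fin (d + 1) → ℕ) (u : Fin d → ℕ) (a p : ℝ)
    (hp : p ≠ 1) (ha : |a| ≤ min 1 (2 / p - 1)) :
    LiStar (sTup d m u) (List.replicate ((sTup d m u).length - 1) (1 : ℝ) ++ [a]) =
      LiStar (List.replicate (sTup d m u).sum 1)
          (xPre d m u p ++
            (1 - p) :: (List.replicate (m (Fin.last d)) (1 : ℝ) ++ [1 + a * p / (1 - p)])) -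
        LiStar (List.replicate (sTup d m u).sum 1)
          (xPre d m u p ++ (1 - p) :: List.replicate (m (Fin.last d) + 1) (1 : ℝ)) := by
  have e1 : sTup d m u = (PolyLogAux.LL (List.ofFn fun i : Fin d => (m i.castSucc, u i)) ++
      [(m (Fin.last d) + 2, a)]).map Prod.fst := by
    simp [sTup, PolyLogAux.LL, List.map_ofFn, List.map_flatten, Function.comp_def]
  have e2 : xPre d m u p = PolyLogAux.XX p (List.ofFn fun i : Fin d => (m i.castSucc, u i)) := by
    simp [xPre, PolyLogAux.XX, List.map_ofFn, Function.comp_def]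
  rw [e1, e2]
  exact PolyLogAux.main_bl _ _ a p hp ha
end
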